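/- arXiv:math/0502056 — 7 statements merged into one kernel-verified Lean document; each statement's English description precedes it below -/
import Mathlib

section
/- Let m ≥ 1, let k be an even integer with k ≥ 2m+2, and let n ≥ 2m+2. Let B ∈ O(n) be the block-diagonal matrix diag(1, ε₁, …, ε_m, −1, …, −1), where ε_t is the 2×2 rotation matrix [[cos(2πt/k), sin(2πt/k)], [−sin(2πt/k), cos(2πt/k)]] occupying rows and columns 2t, 2t+1, and the last n−2m−1 diagonal entries equal −1. Then B^k = I, and the fixed-point group of the automorphism Φ : A ↦ B A B⁻¹ of SO(n) is {A ∈ SO(n) : AB = BA} = { diag(a, A₁, …, A_m, A′) : a ∈ {1, −1}, each A_t ∈ SO(2), A′ ∈ O(n−2m−1), a · det A′ = 1 }. In particular this fixed-point group contains the block-diagonal subgroup H = SO(2)^m × SO(n−2m−1) (taking a = 1), so SO(n)/SO(2)^m × SO(n−2m−1) is a homogeneous Φ-space generated by an inner automorphism of order k. -/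
open Matrix

/-- 0-based block index for the block-diagonal pattern
`diag(a, A₁, …, A_m, A')` with `A_t` of size 2 (rows `2t, 2t+1`, 1-based) and `A'` of size
`n - 2m - 1`. -/
def blkIdx (m i : ℕ) : ℕ := if i = 0 then 0 else if i ≤ 2 * m then (i + 1) / 2 else m + 1

/-- The square diagonal sub-block of size `b` of `A` starting at (0-based) position `a`. -/
def subBlock {n : ℕ} (A : Matrix (Fin n) (Fin n) ℝ) (a b : ℕ) (h : a + b ≤ n) :
    Matrix (Fin b) (Fin b) ℝ :=
  A.submatrix (fun k => ⟨a + k.val, by have := k.isLt; omega⟩)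
    (fun k => ⟨a + k.val, by have := k.isLt; omega⟩)

/-- The matrix `B = diag(1, ε₁, …, ε_m, -1, …, -1)`, where
`ε_t = [[cos(2πt/k), sin(2πt/k)], [-sin(2πt/k), cos(2πt/k)]]` occupies rows and columns
`2t, 2t+1` (1-based; 0-based `2t-1, 2t`, and for such a row `i` one has `t = (i+1)/2`). -/
noncomputable def Bflag (n m k : ℕ) : Matrix (Fin n) (Fin n) ℝ :=
  Matrix.of fun i j =>
    if i.val = 0 ∧ j.val = 0 then 1
    else if 1 ≤ i.val ∧ i.val ≤ 2 * m ∧ i = j then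
      Real.cos (2 * Real.pi * (((i.val + 1) / 2 : ℕ) : ℝ) / (k : ℝ))
    else if i.val % 2 = 1 ∧ i.val ≤ 2 * m ∧ j.val = i.val + 1 then
      Real.sin (2 * Real.pi * (((i.val + 1) / 2 : ℕ) : ℝ) / (k : ℝ))
    else if i.val % 2 = 0 ∧ 1 ≤ i.val ∧ i.val ≤ 2 * m ∧ j.val + 1 = i.val then
      -Real.sin (2 * Real.pi * (((i.val + 1) / 2 : ℕ) : ℝ) / (k : ℝ))
    else if 2 * m + 1 ≤ i.val ∧ i = j then -1
    else 0

/-!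
A matrix `A` commuting with the orthogonal matrix `B` also commutes with `Bᵀ = B⁻¹`, hence with
`B + Bᵀ`. The latter is diagonal: it is `2 cos θ` on a block where `B` rotates by `θ`, with `θ = 0`
on the first block and `θ = π` on the last. Since `k > 2m`, the angles `0 < 2π/k < … < 2πm/k < π`
are distinct points of `[0, π]`, so their cosines are distinct and `A` is block diagonal. Then
`A` commutes with `B` iff it does so block by block: the blocks `1` and `-1` of `B` are
central, and a matrix in `O(2)` commutes with a rotation of nonzero sine iff its determinant is `1`.
Finally `det A` is the product of the determinants of the blocks.
-/

section BlockDiagonal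

variable {ι β κ R : Type*}

/-- `A` is block diagonal for the partition of its index set into the fibres of `b`. Unlike for
`Matrix.blockDiagonal'`, the indices of a block need not be consecutive and are not relabelled. -/
def IsBlockDiagonal [Zero R] (b : ι → β) (A : Matrix ι ι R) : Prop :=
  ∀ i j, b i ≠ b j → A i j = 0

namespace IsBlockDiagonal

variable {b : ι → β} {v : β} {f : κ → ι}

theorem diagonal [DecidableEq ι] [Zero R] (d : ι → R) :
    IsBlockDiagonal b (Matrix.diagonal d) :=
  fun _ _ hij ↦ diagonal_apply_ne _ fun h ↦ hij (congrArg b h)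

theorem one [DecidableEq ι] [Zero R] [One R] : IsBlockDiagonal b (1 : Matrix ι ι R) :=
  .diagonal _

theorem transpose [Zero R] {A : Matrix ι ι R} (hA : IsBlockDiagonal b A) :
    IsBlockDiagonal b Aᵀ :=
  fun i j hij ↦ hA j i hij.symm

theorem add [AddZeroClass R] {A C : Matrix ι ι R} (hA : IsBlockDiagonal b A)
    (hC : IsBlockDiagonal b C) : IsBlockDiagonal b (A + C) :=
  fun i j hij ↦ by rw [Matrix.add_apply, hA i j hij, hC i j hij, add_zero]

theorem mul [Fintype ι] [NonUnitalNonAssocSemiring R] {A C : Matrix ι ι R}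
    (hA : IsBlockDiagonal b A) (hC : IsBlockDiagonal b C) : IsBlockDiagonal b (A * C) := by
  intro i j hij
  rw [mul_apply]
  refine Finset.sum_eq_zero fun l _ ↦ ?_
  obtain hil | hlj : b i ≠ b l ∨ b l ≠ b j := by
    by_contra! h
    exact hij (h.1.trans h.2)
  · rw [hA i l hil, zero_mul]
  · rw [hC l j hlj, mul_zero]

theorem pow [Fintype ι] [DecidableEq ι] [Semiring R] {A : Matrix ι ι R}
    (hA : IsBlockDiagonal b A) (k : ℕ) : IsBlockDiagonal b (A ^ k) := by
  induction k with
  | zero => exact pow_zero A ▸ .one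
  | succ k ih => exact pow_succ A k ▸ ih.mul hA

theorem submatrix_mul [Fintype ι] [Fintype κ] [NonUnitalNonAssocSemiring R] {A : Matrix ι ι R}
    (hA : IsBlockDiagonal b A) (hf : Set.BijOn f Set.univ (b ⁻¹' {v})) (C : Matrix ι ι R) :
    (A * C).submatrix f f = A.submatrix f f * C.submatrix f f := by
  ext i j
  simp only [submatrix_apply, mul_apply]
  refine (Fintype.sum_of_injective f (Set.injOn_univ.mp hf.injOn) _ _ (fun l hl ↦ ?_)
    fun _ ↦ rfl).symm
  have hfi : b (f i) = v := hf.mapsTo (Set.mem_univ i)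
  have hbl : b l ≠ v := fun h ↦ hl (Set.image_univ ▸ hf.surjOn h)
  rw [hA _ _ (hfi ▸ hbl.symm), zero_mul]

theorem submatrix_pow [Fintype ι] [DecidableEq ι] [Fintype κ] [DecidableEq κ] [Semiring R]
    {A : Matrix ι ι R} (hA : IsBlockDiagonal b A) (hf : Set.BijOn f Set.univ (b ⁻¹' {v}))
    (k : ℕ) : (A ^ k).submatrix f f = A.submatrix f f ^ k := by
  induction k with
  | zero => simpa only [pow_zero] using submatrix_one f (Set.injOn_univ.mp hf.injOn)
  | succ k ih => rw [pow_succ, pow_succ, (hA.pow k).submatrix_mul hf, ih]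

theorem det [Fintype ι] [DecidableEq ι] [LinearOrder β] [CommRing R] {A : Matrix ι ι R}
    (hA : IsBlockDiagonal b A) {s : Finset β} (hs : ∀ i, b i ∈ s) :
    A.det = ∏ v ∈ s, (A.toSquareBlock b v).det := by
  have hA' : A.BlockTriangular b := fun i j hij ↦ hA i j hij.ne'
  refine hA'.det.trans (Finset.prod_subset (Finset.image_subset_iff.mpr fun i _ ↦ hs i)
    fun v _ hv ↦ ?_)
  have : IsEmpty {i // b i = v} := ⟨fun i ↦ hv (Finset.mem_image.mpr ⟨i, Finset.mem_univ _, i.2⟩)⟩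
  exact det_isEmpty

end IsBlockDiagonal

theorem det_toSquareBlock_eq_det_submatrix [Fintype ι] [DecidableEq β] [DecidableEq ι]
    [Fintype κ] [DecidableEq κ] [CommRing R] {b : ι → β} {v : β} {f : κ → ι}
    (hf : Set.BijOn f Set.univ (b ⁻¹' {v})) (A : Matrix ι ι R) :
    (A.toSquareBlock b v).det = (A.submatrix f f).det :=
  let e : κ ≃ {i // b i = v} := (Equiv.Set.univ κ).symm.trans hf.equiv
  (det_submatrix_equiv_self e (A.toSquareBlock b v)).symm

theorem apply_eq_of_submatrix_eq {b : ι → β} {v : β} {f : κ → ι}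
    (hf : Set.BijOn f Set.univ (b ⁻¹' {v})) {A C : Matrix ι ι R}
    (h : A.submatrix f f = C.submatrix f f) {i j : ι} (hi : b i = v) (hj : b j = v) :
    A i j = C i j := by
  obtain ⟨i, -, rfl⟩ := hf.surjOn hi
  obtain ⟨j, -, rfl⟩ := hf.surjOn hj
  exact congrFun₂ h i j

theorem isBlockDiagonal_of_commute_diagonal [Fintype ι] [DecidableEq ι] [CommSemiring R]
    [IsLeftCancelMulZero R] {b : ι → β} {d : β → R} (hd : Set.InjOn d (Set.range b))
    {A : Matrix ι ι R} (hA : Commute A (diagonal (d ∘ b))) : IsBlockDiagonal b A := by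
  intro i j hij
  have hentry : A i j * d (b j) = d (b i) * A i j := by
    simpa only [mul_diagonal, diagonal_mul, Function.comp_apply] using congrFun₂ hA.eq i j
  by_contra hne
  rw [mul_comm (d (b i))] at hentry
  exact hij (hd ⟨i, rfl⟩ ⟨j, rfl⟩ (mul_left_cancel₀ hne hentry).symm)

end BlockDiagonal

theorem commute_transpose_right_of_orthogonal {ι R : Type*} [Fintype ι] [DecidableEq ι]
    [CommRing R] {A C : Matrix ι ι R} (hC : Cᵀ * C = 1) (hAC : Commute A C) : Commute A Cᵀ :=
  Commute.units_inv_right (u := ⟨C, Cᵀ, mul_eq_one_comm.mp hC, hC⟩) hAC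

theorem transpose_mul_self_eq_one_iff_fin_one {R : Type*} [Ring R] [NoZeroDivisors R]
    (X : Matrix (Fin 1) (Fin 1) R) : Xᵀ * X = 1 ↔ X 0 0 = 1 ∨ X 0 0 = -1 := by
  rw [← mul_self_eq_one_iff, ← Matrix.ext_iff]
  simp [mul_apply]

section Rotation

open Real

/-- The plane rotation matrix, in the sign convention of the blocks `ε_t` of `Bflag`. -/
noncomputable def planeRotation (θ : ℝ) : Matrix (Fin 2) (Fin 2) ℝ :=
  !![cos θ, sin θ; -sin θ, cos θ]

theorem planeRotation_zero : planeRotation 0 = 1 := by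
  simp [planeRotation, one_fin_two]

theorem planeRotation_nat_mul_two_pi (t : ℕ) : planeRotation (t * (2 * π)) = 1 := by
  have hsin : sin (t * (2 * π)) = 0 := (sin_periodic.nat_mul_eq t).trans sin_zero
  rw [planeRotation, cos_nat_mul_two_pi, hsin, neg_zero, one_fin_two]

theorem planeRotation_add (θ φ : ℝ) :
    planeRotation (θ + φ) = planeRotation θ * planeRotation φ := by
  ext i j
  fin_cases i <;> fin_cases j <;>
    simp [planeRotation, cos_add, sin_add, add_comm, sub_eq_add_neg]

theorem planeRotation_pow (θ : ℝ) (k : ℕ) : planeRotation θ ^ k = planeRotation (k * θ) := by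
  induction k with
  | zero => rw [pow_zero, Nat.cast_zero, zero_mul, planeRotation_zero]
  | succ k ih => rw [pow_succ, ih, ← planeRotation_add, Nat.cast_succ, add_one_mul]

theorem planeRotation_transpose (θ : ℝ) : (planeRotation θ)ᵀ = planeRotation (-θ) := by
  ext i j
  fin_cases i <;> fin_cases j <;> simp [planeRotation]

theorem planeRotation_transpose_mul_self (θ : ℝ) : (planeRotation θ)ᵀ * planeRotation θ = 1 := by
  rw [planeRotation_transpose, ← planeRotation_add, neg_add_cancel, planeRotation_zero]

theorem planeRotation_add_transpose (θ : ℝ) :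
    planeRotation θ + (planeRotation θ)ᵀ = diagonal fun _ ↦ 2 * cos θ := by
  ext i j
  fin_cases i <;> fin_cases j <;> simp [planeRotation, two_mul]

theorem commute_planeRotation_iff {θ : ℝ} (hθ : sin θ ≠ 0) (X : Matrix (Fin 2) (Fin 2) ℝ) :
    Commute X (planeRotation θ) ↔ X 0 0 = X 1 1 ∧ X 0 1 = -X 1 0 := by
  have hX : X = !![X 0 0, X 0 1; X 1 0, X 1 1] := eta_fin_two X
  constructor
  · intro h
    have h00 := congrFun₂ h.eq 0 0
    have h01 := congrFun₂ h.eq 0 1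
    simp only [planeRotation, mul_apply, Fin.sum_univ_two, of_apply, cons_val', cons_val_zero,
      cons_val_one, cons_val_fin_one] at h00 h01
    exact ⟨mul_right_cancel₀ hθ (by linarith), mul_right_cancel₀ hθ (by linarith)⟩
  · rintro ⟨hdiag, hoff⟩
    rw [hX, hdiag, hoff, commute_iff_eq, planeRotation, mul_fin_two, mul_fin_two]
    ext i j
    fin_cases i <;> fin_cases j <;> simp [mul_comm, add_comm]

theorem commute_planeRotation_iff_det_eq_one {θ : ℝ} (hθ : sin θ ≠ 0)
    {X : Matrix (Fin 2) (Fin 2) ℝ} (hX : Xᵀ * X = 1) : Commute X (planeRotation θ) ↔ X.det = 1 := by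
  have hSO : X.det = 1 ↔ X ∈ specialOrthogonalGroup (Fin 2) ℝ := by
    rw [mem_specialOrthogonalGroup_iff, mem_orthogonalGroup_iff']
    exact (and_iff_right hX).symm
  have hrow : X 0 0 ^ 2 + X 1 0 ^ 2 = 1 := by
    simpa [mul_apply, sq] using congrFun₂ hX 0 0
  rw [commute_planeRotation_iff hθ, hSO, mem_specialOrthogonalGroup_fin_two_iff]
  exact and_congr_right fun _ ↦ iff_self_and.mpr fun hoff ↦ by rw [hoff, neg_sq, hrow]

end Rotation

section Flag

open Real

variable {n m k : ℕ}

/-- `blkIdx m` as a function on `Fin n`: the partition of the indices by the blocks of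
`diag(a, A₁, …, A_m, A')`, in the form expected by `IsBlockDiagonal`. -/
def flagIdx (n m : ℕ) (i : Fin n) : ℕ := blkIdx m i

theorem flagIdx_eq_zero_iff {i : Fin n} : flagIdx n m i = 0 ↔ i.val = 0 := by
  unfold flagIdx blkIdx
  grind

theorem flagIdx_eq_iff {i : Fin n} {t : ℕ} (ht : 1 ≤ t) (htm : t ≤ m) :
    flagIdx n m i = t ↔ 2 * t - 1 ≤ i ∧ i < 2 * t - 1 + 2 := by
  unfold flagIdx blkIdx
  split_ifs <;> omega

theorem flagIdx_eq_succ_iff {i : Fin n} : flagIdx n m i = m + 1 ↔ 2 * m + 1 ≤ i := by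
  unfold flagIdx blkIdx
  grind

theorem flagIdx_le (i : Fin n) : flagIdx n m i ≤ m + 1 := by
  unfold flagIdx blkIdx
  split_ifs <;> omega

/-- The inclusion of the interval of `b` indices starting at `a`; `subBlock A a b h` is the
restriction of `A` along it. -/
def intervalEmb {a b : ℕ} (h : a + b ≤ n) (i : Fin b) : Fin n := ⟨a + i, by omega⟩

theorem subBlock_eq_submatrix {a b : ℕ} (h : a + b ≤ n) (A : Matrix (Fin n) (Fin n) ℝ) :
    subBlock A a b h = A.submatrix (intervalEmb h) (intervalEmb h) := rfl

theorem intervalEmb_injective {a b : ℕ} (h : a + b ≤ n) : Function.Injective (intervalEmb h) :=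
  fun i j hij ↦ by simpa [intervalEmb, Fin.ext_iff] using hij

theorem bijOn_intervalEmb {a b v : ℕ} (h : a + b ≤ n)
    (hv : ∀ i : Fin n, flagIdx n m i = v ↔ a ≤ i ∧ i < a + b) :
    Set.BijOn (intervalEmb h) Set.univ (flagIdx n m ⁻¹' {v}) := by
  refine ⟨fun i _ ↦ (hv _).mpr ?_, (intervalEmb_injective h).injOn, fun i hi ↦ ?_⟩
  · exact ⟨Nat.le_add_right a i, Nat.add_lt_add_left i.isLt a⟩
  · obtain ⟨hai, hib⟩ := (hv i).mp hi
    exact ⟨⟨i - a, by omega⟩, Set.mem_univ _, Fin.ext (Nat.add_sub_of_le hai)⟩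

theorem bijOn_firstBlock (h : 0 + 1 ≤ n) :
    Set.BijOn (intervalEmb h) Set.univ (flagIdx n m ⁻¹' {0}) :=
  bijOn_intervalEmb h fun i ↦ by rw [flagIdx_eq_zero_iff]; omega

theorem bijOn_midBlock {t : ℕ} (ht : 1 ≤ t) (htm : t ≤ m) (h : 2 * t - 1 + 2 ≤ n) :
    Set.BijOn (intervalEmb h) Set.univ (flagIdx n m ⁻¹' {t}) :=
  bijOn_intervalEmb h fun _ ↦ flagIdx_eq_iff ht htm

theorem bijOn_lastBlock (h : 2 * m + 1 + (n - (2 * m + 1)) ≤ n) :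
    Set.BijOn (intervalEmb h) Set.univ (flagIdx n m ⁻¹' {m + 1}) :=
  bijOn_intervalEmb h fun i ↦ by rw [flagIdx_eq_succ_iff]; omega

theorem subBlock_transpose {a b : ℕ} (h : a + b ≤ n) (A : Matrix (Fin n) (Fin n) ℝ) :
    subBlock Aᵀ a b h = (subBlock A a b h)ᵀ := rfl

theorem subBlock_add {a b : ℕ} (h : a + b ≤ n) (A C : Matrix (Fin n) (Fin n) ℝ) :
    subBlock (A + C) a b h = subBlock A a b h + subBlock C a b h := rfl

theorem subBlock_one {a b : ℕ} (h : a + b ≤ n) :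
    subBlock (1 : Matrix (Fin n) (Fin n) ℝ) a b h = 1 :=
  submatrix_one _ (intervalEmb_injective h)

theorem subBlock_diagonal_comp_flagIdx {a b v : ℕ} (h : a + b ≤ n)
    (hv : Set.BijOn (intervalEmb h) Set.univ (flagIdx n m ⁻¹' {v})) (d : ℕ → ℝ) :
    subBlock (diagonal (d ∘ flagIdx n m)) a b h = diagonal fun _ ↦ d v := by
  rw [subBlock_eq_submatrix, submatrix_diagonal _ _ (intervalEmb_injective h)]
  exact congrArg diagonal (funext fun i ↦ congrArg d (hv.mapsTo (Set.mem_univ i)))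

theorem forall_corner_iff (p : ℝ → Prop) (A : Matrix (Fin n) (Fin n) ℝ) (h : 0 + 1 ≤ n) :
    (∀ i j : Fin n, i.val = 0 → j.val = 0 → p (A i j)) ↔ p (subBlock A 0 1 h 0 0) := by
  refine ⟨fun hp ↦ hp _ _ rfl rfl, fun hp i j hi hj ↦ ?_⟩
  rwa [show i = intervalEmb h 0 from Fin.ext hi, show j = intervalEmb h 0 from Fin.ext hj]

namespace IsBlockDiagonal

variable {A C : Matrix (Fin n) (Fin n) ℝ}

theorem eq_iff_subBlock (hn : 2 * m + 1 ≤ n) (hA : IsBlockDiagonal (flagIdx n m) A)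
    (hC : IsBlockDiagonal (flagIdx n m) C) :
    A = C ↔ subBlock A 0 1 (by omega) = subBlock C 0 1 (by omega) ∧
      (∀ t : ℕ, ∀ _ : 1 ≤ t, ∀ _ : t ≤ m,
        subBlock A (2 * t - 1) 2 (by omega) = subBlock C (2 * t - 1) 2 (by omega)) ∧
      subBlock A (2 * m + 1) (n - (2 * m + 1)) (by omega) =
        subBlock C (2 * m + 1) (n - (2 * m + 1)) (by omega) := by
  refine ⟨by rintro rfl; simp, fun ⟨hfirst, hmid, hlast⟩ ↦ ?_⟩
  ext i j
  obtain hij | hij := ne_or_eq (flagIdx n m i) (flagIdx n m j)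
  · rw [hA i j hij, hC i j hij]
  obtain hj | ⟨hj, hjm⟩ | hj : flagIdx n m j = 0 ∨
      (1 ≤ flagIdx n m j ∧ flagIdx n m j ≤ m) ∨ flagIdx n m j = m + 1 := by
    have := flagIdx_le (m := m) j
    omega
  · exact apply_eq_of_submatrix_eq (bijOn_firstBlock (by omega)) hfirst (hij.trans hj) hj
  · exact apply_eq_of_submatrix_eq (bijOn_midBlock hj hjm (by omega)) (hmid _ hj hjm) hij rfl
  · exact apply_eq_of_submatrix_eq (bijOn_lastBlock (by omega)) hlast (hij.trans hj) hj

theorem transpose_mul_self_eq_one_iff (hn : 2 * m + 1 ≤ n)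
    (hA : IsBlockDiagonal (flagIdx n m) A) :
    Aᵀ * A = 1 ↔ (subBlock A 0 1 (by omega))ᵀ * subBlock A 0 1 (by omega) = 1 ∧
      (∀ t : ℕ, ∀ _ : 1 ≤ t, ∀ _ : t ≤ m,
        (subBlock A (2 * t - 1) 2 (by omega))ᵀ * subBlock A (2 * t - 1) 2 (by omega) = 1) ∧
      (subBlock A (2 * m + 1) (n - (2 * m + 1)) (by omega))ᵀ *
        subBlock A (2 * m + 1) (n - (2 * m + 1)) (by omega) = 1 := by
  have hblock {a b v : ℕ} (h : a + b ≤ n)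
      (hv : Set.BijOn (intervalEmb h) Set.univ (flagIdx n m ⁻¹' {v})) :
      subBlock (Aᵀ * A) a b h = subBlock 1 a b h ↔
        (subBlock A a b h)ᵀ * subBlock A a b h = 1 := by
    rw [subBlock_one]
    exact Eq.congr_left (hA.transpose.submatrix_mul hv A)
  rw [(hA.transpose.mul hA).eq_iff_subBlock hn .one]
  exact and_congr (hblock _ (bijOn_firstBlock _)) (and_congr
    (forall₃_congr fun t ht htm ↦ hblock _ (bijOn_midBlock ht htm _))
    (hblock _ (bijOn_lastBlock _)))

theorem commute_iff_subBlock (hn : 2 * m + 1 ≤ n) (hA : IsBlockDiagonal (flagIdx n m) A)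
    (hC : IsBlockDiagonal (flagIdx n m) C) :
    Commute A C ↔ Commute (subBlock A 0 1 (by omega)) (subBlock C 0 1 (by omega)) ∧
      (∀ t : ℕ, ∀ _ : 1 ≤ t, ∀ _ : t ≤ m,
        Commute (subBlock A (2 * t - 1) 2 (by omega)) (subBlock C (2 * t - 1) 2 (by omega))) ∧
      Commute (subBlock A (2 * m + 1) (n - (2 * m + 1)) (by omega))
        (subBlock C (2 * m + 1) (n - (2 * m + 1)) (by omega)) := by
  have hblock {a b v : ℕ} (h : a + b ≤ n)
      (hv : Set.BijOn (intervalEmb h) Set.univ (flagIdx n m ⁻¹' {v})) :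
      subBlock (A * C) a b h = subBlock (C * A) a b h ↔
        Commute (subBlock A a b h) (subBlock C a b h) :=
    Eq.congr (hA.submatrix_mul hv C) (hC.submatrix_mul hv A)
  rw [commute_iff_eq, (hA.mul hC).eq_iff_subBlock hn (hC.mul hA)]
  exact and_congr (hblock _ (bijOn_firstBlock _)) (and_congr
    (forall₃_congr fun t ht htm ↦ hblock _ (bijOn_midBlock ht htm _))
    (hblock _ (bijOn_lastBlock _)))

theorem det_eq_mul_prod_mul (hn : 2 * m + 1 ≤ n) (hA : IsBlockDiagonal (flagIdx n m) A) :
    A.det = subBlock A 0 1 (by omega) 0 0 *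
      (∏ t : Fin m, (subBlock A (2 * (t + 1) - 1) 2 (by omega)).det) *
      (subBlock A (2 * m + 1) (n - (2 * m + 1)) (by omega)).det := by
  have hrange (i : Fin n) : flagIdx n m i ∈ Finset.range (m + 2) :=
    Finset.mem_range.mpr (Nat.lt_succ_of_le (flagIdx_le i))
  rw [hA.det hrange, Finset.prod_range_succ, Finset.prod_range_succ', Finset.prod_range,
    mul_comm (∏ t : Fin m, _), det_toSquareBlock_eq_det_submatrix (bijOn_firstBlock (by omega)),
    det_toSquareBlock_eq_det_submatrix (bijOn_lastBlock (by omega)), det_fin_one]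
  congr! with t
  exact det_toSquareBlock_eq_det_submatrix (bijOn_midBlock (by omega) (by omega) (by omega)) A

theorem det_eq_mul_of_midBlocks (hn : 2 * m + 1 ≤ n) (hA : IsBlockDiagonal (flagIdx n m) A)
    (hmid : ∀ t : ℕ, ∀ _ : 1 ≤ t, ∀ _ : t ≤ m, (subBlock A (2 * t - 1) 2 (by omega)).det = 1) :
    A.det = subBlock A 0 1 (by omega) 0 0 *
      (subBlock A (2 * m + 1) (n - (2 * m + 1)) (by omega)).det := by
  rw [hA.det_eq_mul_prod_mul hn, Finset.prod_eq_one, mul_one]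
  exact fun t _ ↦ hmid (t + 1) (by omega) (by omega)

end IsBlockDiagonal

theorem isBlockDiagonal_Bflag (n m k : ℕ) : IsBlockDiagonal (flagIdx n m) (Bflag n m k) := by
  intro i j hij
  unfold flagIdx blkIdx at hij
  simp only [Bflag, of_apply]
  split_ifs at hij ⊢ <;> first | rfl | omega

theorem subBlock_Bflag_first (h : 0 + 1 ≤ n) : subBlock (Bflag n m k) 0 1 h = 1 := by
  ext i j
  fin_cases i; fin_cases j
  simp [subBlock, Bflag]

theorem subBlock_Bflag_mid {t : ℕ} (ht : 1 ≤ t) (htm : t ≤ m) (h : 2 * t - 1 + 2 ≤ n) :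
    subBlock (Bflag n m k) (2 * t - 1) 2 h = planeRotation (2 * π * t / k) := by
  have hstart : 2 * t - 1 + 1 = 2 * t := by omega
  have hhalf : (2 * t + 1) / 2 = t := by omega
  ext i j
  fin_cases i <;> fin_cases j <;>
    simp [subBlock, Bflag, planeRotation, Fin.ext_iff, hstart, hhalf] <;> grind

theorem subBlock_Bflag_last (h : 2 * m + 1 + (n - (2 * m + 1)) ≤ n) :
    subBlock (Bflag n m k) (2 * m + 1) (n - (2 * m + 1)) h = -1 := by
  ext i j
  simp only [subBlock, Bflag, of_apply, submatrix_apply, Matrix.neg_apply, Matrix.one_apply,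
    Fin.ext_iff]
  split_ifs <;> first | omega | simp

theorem Bflag_transpose_mul_self (hn : 2 * m + 1 ≤ n) :
    (Bflag n m k)ᵀ * Bflag n m k = 1 := by
  rw [(isBlockDiagonal_Bflag n m k).transpose_mul_self_eq_one_iff hn]
  refine ⟨?_, fun t ht htm ↦ ?_, ?_⟩
  · rw [subBlock_Bflag_first, transpose_one, one_mul]
  · rw [subBlock_Bflag_mid ht htm, planeRotation_transpose_mul_self]
  · rw [subBlock_Bflag_last, transpose_neg, transpose_one, neg_mul_neg, one_mul]

theorem Bflag_pow (hn : 2 * m + 1 ≤ n) (hk : Even k) (hk0 : k ≠ 0) : Bflag n m k ^ k = 1 := by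
  have hB := isBlockDiagonal_Bflag n m k
  have hblock {a b v : ℕ} (h : a + b ≤ n)
      (hv : Set.BijOn (intervalEmb h) Set.univ (flagIdx n m ⁻¹' {v})) :
      subBlock (Bflag n m k ^ k) a b h = subBlock (Bflag n m k) a b h ^ k :=
    hB.submatrix_pow hv k
  refine ((hB.pow k).eq_iff_subBlock hn .one).mpr ⟨?_, fun t ht htm ↦ ?_, ?_⟩
  · rw [hblock _ (bijOn_firstBlock _), subBlock_Bflag_first, one_pow, subBlock_one]
  · have hangle : (k : ℝ) * (2 * π * t / k) = t * (2 * π) := by field_simp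
    rw [hblock _ (bijOn_midBlock ht htm _), subBlock_Bflag_mid ht htm, planeRotation_pow, hangle,
      planeRotation_nat_mul_two_pi, subBlock_one]
  · rw [hblock _ (bijOn_lastBlock _), subBlock_Bflag_last, hk.neg_one_pow, subBlock_one]

/-- The argument in `[0, π]` of the eigenvalues `e^{±iθ}` of `Bflag n m k` on the block `v`;
every `v > m` stands for the last block, where the eigenvalue is `-1`. -/
noncomputable def blockAngle (m k v : ℕ) : ℝ := if v ≤ m then 2 * π * v / k else π

theorem two_pi_mul_div_lt_pi {t : ℕ} (ht : 2 * t < k) : 2 * π * t / k < π := by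
  have hk : (0 : ℝ) < k := by exact_mod_cast (Nat.zero_le _).trans_lt ht
  have ht' : 2 * (t : ℝ) < k := by exact_mod_cast ht
  rw [div_lt_iff₀ hk, mul_right_comm, mul_comm]
  exact mul_lt_mul_of_pos_left ht' pi_pos

theorem sin_two_pi_mul_div_pos {t : ℕ} (ht : 1 ≤ t) (htk : 2 * t < k) :
    0 < sin (2 * π * t / k) := by
  have ht0 : (0 : ℝ) < t := by exact_mod_cast ht
  have hk : (0 : ℝ) < k := by exact_mod_cast (Nat.zero_le _).trans_lt htk
  exact sin_pos_of_pos_of_lt_pi (div_pos (mul_pos two_pi_pos ht0) hk) (two_pi_mul_div_lt_pi htk)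

theorem blockAngle_mem_Icc (hkm : 2 * m < k) (v : ℕ) : blockAngle m k v ∈ Set.Icc 0 π := by
  unfold blockAngle
  split_ifs
  · exact ⟨by positivity, (two_pi_mul_div_lt_pi (by omega)).le⟩
  · exact ⟨pi_pos.le, le_rfl⟩

theorem blockAngle_strictMonoOn (hkm : 2 * m < k) :
    StrictMonoOn (blockAngle m k) (Set.Iic (m + 1)) := by
  intro v _ w hw hvw
  have hk : (0 : ℝ) < k := by exact_mod_cast (Nat.zero_le _).trans_lt hkm
  have hvm : v ≤ m := Nat.lt_succ_iff.mp (hvw.trans_le hw)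
  unfold blockAngle
  rw [if_pos hvm]
  split_ifs
  · gcongr
  · exact two_pi_mul_div_lt_pi (by omega)

theorem two_mul_cos_blockAngle_injOn (hkm : 2 * m < k) :
    Set.InjOn (fun v ↦ 2 * cos (blockAngle m k v)) (Set.Iic (m + 1)) := by
  intro v hv w hw h
  exact (blockAngle_strictMonoOn hkm).injOn hv hw <| injOn_cos (blockAngle_mem_Icc hkm v)
    (blockAngle_mem_Icc hkm w) (mul_left_cancel₀ two_ne_zero h)

theorem Bflag_add_transpose (hn : 2 * m + 1 ≤ n) :
    Bflag n m k + (Bflag n m k)ᵀ =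
      diagonal ((fun v ↦ 2 * cos (blockAngle m k v)) ∘ flagIdx n m) := by
  have hB := isBlockDiagonal_Bflag n m k
  refine ((hB.add hB.transpose).eq_iff_subBlock hn (.diagonal _)).mpr
    ⟨?_, fun t ht htm ↦ ?_, ?_⟩
  · rw [subBlock_add, subBlock_transpose, subBlock_Bflag_first,
      subBlock_diagonal_comp_flagIdx _ (bijOn_firstBlock _), blockAngle, if_pos (Nat.zero_le m),
      Nat.cast_zero, mul_zero, zero_div, cos_zero, mul_one, transpose_one, one_add_one_eq_two]
    rfl
  · rw [subBlock_add, subBlock_transpose, subBlock_Bflag_mid ht htm, planeRotation_add_transpose,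
      subBlock_diagonal_comp_flagIdx _ (bijOn_midBlock ht htm _), blockAngle, if_pos htm]
  · rw [subBlock_add, subBlock_transpose, subBlock_Bflag_last,
      subBlock_diagonal_comp_flagIdx _ (bijOn_lastBlock _), blockAngle, if_neg (by omega), cos_pi,
      transpose_neg, transpose_one, ← neg_add, one_add_one_eq_two, mul_neg_one, ← diagonal_neg]
    rfl

theorem isBlockDiagonal_of_commute_Bflag (hn : 2 * m + 1 ≤ n) (hkm : 2 * m < k)
    {A : Matrix (Fin n) (Fin n) ℝ} (hA : Commute A (Bflag n m k)) :
    IsBlockDiagonal (flagIdx n m) A := by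
  have hsum : Commute A (Bflag n m k + (Bflag n m k)ᵀ) :=
    hA.add_right (commute_transpose_right_of_orthogonal (Bflag_transpose_mul_self hn) hA)
  rw [Bflag_add_transpose hn] at hsum
  exact isBlockDiagonal_of_commute_diagonal ((two_mul_cos_blockAngle_injOn hkm).mono
    (Set.range_subset_iff.mpr flagIdx_le)) hsum

theorem IsBlockDiagonal.commute_Bflag_iff (hn : 2 * m + 1 ≤ n)
    {A : Matrix (Fin n) (Fin n) ℝ} (hA : IsBlockDiagonal (flagIdx n m) A) :
    Commute A (Bflag n m k) ↔ ∀ t : ℕ, ∀ _ : 1 ≤ t, ∀ _ : t ≤ m,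
      Commute (subBlock A (2 * t - 1) 2 (by omega)) (planeRotation (2 * π * t / k)) := by
  rw [hA.commute_iff_subBlock hn (isBlockDiagonal_Bflag n m k), subBlock_Bflag_first,
    subBlock_Bflag_last, and_iff_right (Commute.one_right _),
    and_iff_left (Commute.one_right _).neg_right]
  exact forall₃_congr fun t ht htm ↦ by rw [subBlock_Bflag_mid ht htm]

theorem IsBlockDiagonal.commute_Bflag_iff_det_eq_one (hn : 2 * m + 1 ≤ n) (hkm : 2 * m < k)
    {A : Matrix (Fin n) (Fin n) ℝ} (hA : IsBlockDiagonal (flagIdx n m) A)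
    (horth : ∀ t : ℕ, ∀ _ : 1 ≤ t, ∀ _ : t ≤ m,
      (subBlock A (2 * t - 1) 2 (by omega))ᵀ * subBlock A (2 * t - 1) 2 (by omega) = 1) :
    Commute A (Bflag n m k) ↔ ∀ t : ℕ, ∀ _ : 1 ≤ t, ∀ _ : t ≤ m,
      (subBlock A (2 * t - 1) 2 (by omega)).det = 1 := by
  rw [hA.commute_Bflag_iff hn]
  exact forall₃_congr fun t ht htm ↦ commute_planeRotation_iff_det_eq_one
    (sin_two_pi_mul_div_pos ht (by omega)).ne' (horth t ht htm)

end Flag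

/-- Let `m ≥ 1`, let `k` be even with `k ≥ 2m+2`, and `n ≥ 2m+2`. The
matrix `B = diag(1, ε₁, …, ε_m, -1, …, -1)` is orthogonal, satisfies `B^k = 1`, and the
fixed points of `Φ : A ↦ BAB⁻¹` in `SO(n)`, i.e. `{A ∈ SO(n) : AB = BA}`, are exactly the
block-diagonal matrices `diag(a, A₁, …, A_m, A')` with `a ∈ {1,-1}`, `A_t ∈ SO(2)`,
`A' ∈ O(n-2m-1)` and `a·det A' = 1`. In particular the fixed-point group contains the
subgroup `H = SO(2)^m × SO(n-2m-1)` (taking `a = 1`), so `SO(n)/SO(2)^m × SO(n-2m-1)` is a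
homogeneous Φ-space generated by an inner automorphism of order `k`. -/
theorem statement1 (n m k : ℕ) (hm : 1 ≤ m) (hk : Even k) (hkm : 2 * m + 2 ≤ k)
    (hn : 2 * m + 2 ≤ n) :
    -- B is orthogonal
    (Bflag n m k)ᵀ * Bflag n m k = 1 ∧
    -- B^k = 1
    (Bflag n m k) ^ k = 1 ∧
    -- description of the fixed-point set {A ∈ SO(n) : AB = BA}
    (∀ A : Matrix (Fin n) (Fin n) ℝ, Aᵀ * A = 1 → A.det = 1 →
      (A * Bflag n m k = Bflag n m k * A ↔
        ((∀ i j : Fin n, blkIdx m i.val ≠ blkIdx m j.val → A i j = 0) ∧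
         (∀ i j : Fin n, i.val = 0 → j.val = 0 → (A i j = 1 ∨ A i j = -1)) ∧
         (∀ t : ℕ, ∀ _ht1 : 1 ≤ t, ∀ _ht : t ≤ m,
           (subBlock A (2 * t - 1) 2 (by omega))ᵀ *
              subBlock A (2 * t - 1) 2 (by omega) = 1 ∧
           (subBlock A (2 * t - 1) 2 (by omega)).det = 1) ∧
         (subBlock A (2 * m + 1) (n - (2 * m + 1)) (by omega))ᵀ *
            subBlock A (2 * m + 1) (n - (2 * m + 1)) (by omega) = 1 ∧
         (∀ i j : Fin n, i.val = 0 → j.val = 0 →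
           A i j * (subBlock A (2 * m + 1) (n - (2 * m + 1)) (by omega)).det = 1)))) ∧
    -- the fixed-point group contains H = SO(2)^m × SO(n-2m-1)
    (∀ A : Matrix (Fin n) (Fin n) ℝ,
      (∀ i j : Fin n, blkIdx m i.val ≠ blkIdx m j.val → A i j = 0) →
      (∀ i j : Fin n, i.val = 0 → j.val = 0 → A i j = 1) →
      (∀ t : ℕ, ∀ _ht1 : 1 ≤ t, ∀ _ht : t ≤ m,
        (subBlock A (2 * t - 1) 2 (by omega))ᵀ *
           subBlock A (2 * t - 1) 2 (by omega) = 1 ∧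
        (subBlock A (2 * t - 1) 2 (by omega)).det = 1) →
      ((subBlock A (2 * m + 1) (n - (2 * m + 1)) (by omega))ᵀ *
          subBlock A (2 * m + 1) (n - (2 * m + 1)) (by omega) = 1 ∧
       (subBlock A (2 * m + 1) (n - (2 * m + 1)) (by omega)).det = 1) →
      (Aᵀ * A = 1 ∧ A.det = 1 ∧ A * Bflag n m k = Bflag n m k * A)) := by
  have hn' : 2 * m + 1 ≤ n := by omega
  have hkm' : 2 * m < k := by omega
  refine ⟨Bflag_transpose_mul_self hn', Bflag_pow hn' hk (by omega), fun A hA hdet ↦ ⟨?_, ?_⟩, ?_⟩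
  · intro hcomm
    have hblock := isBlockDiagonal_of_commute_Bflag hn' hkm' hcomm
    obtain ⟨hfirst, hmid, hlast⟩ := (hblock.transpose_mul_self_eq_one_iff hn').mp hA
    have hmid_det := (hblock.commute_Bflag_iff_det_eq_one hn' hkm' hmid).mp hcomm
    rw [hblock.det_eq_mul_of_midBlocks hn' hmid_det] at hdet
    rw [transpose_mul_self_eq_one_iff_fin_one] at hfirst
    exact ⟨hblock, (forall_corner_iff (fun x ↦ x = 1 ∨ x = -1) A (by omega)).mpr hfirst,
      fun t ht htm ↦ ⟨hmid t ht htm, hmid_det t ht htm⟩, hlast,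
      (forall_corner_iff (· * _ = 1) A (by omega)).mpr hdet⟩
  · rintro ⟨hblock, -, hmid, -⟩
    exact (IsBlockDiagonal.commute_Bflag_iff_det_eq_one hn' hkm' hblock
      fun t ht htm ↦ (hmid t ht htm).1).mpr fun t ht htm ↦ (hmid t ht htm).2
  · rintro A (hblock : IsBlockDiagonal (flagIdx n m) A) hcorner hmid ⟨hlast, hlast_det⟩
    have hmid_orth := fun t ht htm ↦ (hmid t ht htm).1
    have hmid_det := fun t ht htm ↦ (hmid t ht htm).2
    have hfirst := (forall_corner_iff (· = 1) A (by omega)).mp hcorner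
    refine ⟨(hblock.transpose_mul_self_eq_one_iff hn').mpr ⟨?_, hmid_orth, hlast⟩, ?_,
      (hblock.commute_Bflag_iff_det_eq_one hn' hkm' hmid_orth).mpr hmid_det⟩
    · exact (transpose_mul_self_eq_one_iff_fin_one _).mpr (.inl hfirst)
    · rw [hblock.det_eq_mul_of_midBlocks hn' hmid_det, hfirst, hlast_det, one_mul]
end

section
/- The subspaces 𝔪₁, 𝔪₂, 𝔪₃ satisfy the bracket relations [𝔪₁, 𝔪₂] ⊆ 𝔪₃, [𝔪₂, 𝔪₃] ⊆ 𝔪₁, and [𝔪₃, 𝔪₁] ⊆ 𝔪₂ (i.e. [𝔪_i, 𝔪_{i+1}] ⊆ 𝔪_{i+2} with indices modulo 3). -/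
open Matrix

namespace FlagMfld

variable {n : ℕ}

/-- Membership in `so(n)`: real skew-symmetric `n×n` matrices. -/
def inSO (X : Matrix (Fin n) (Fin n) ℝ) : Prop := Xᵀ = -X

/-- The isotropy subalgebra `𝔥 ≅ so(2) ⊕ so(n-3)`: skew matrices whose only (possibly)
nonzero entries are `H₂₃`, `H₃₂` and `H_{ij}` with `i,j ≥ 4` (1-based indexing; indices are
0-based in the formalization, so the allowed positions are `(1,2)`, `(2,1)` and `i,j ≥ 3`). -/
def inH (X : Matrix (Fin n) (Fin n) ℝ) : Prop :=
  Xᵀ = -X ∧ ∀ i j : Fin n, X i j ≠ 0 →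
    (i.val = 1 ∧ j.val = 2) ∨ (i.val = 2 ∧ j.val = 1) ∨ (3 ≤ i.val ∧ 3 ≤ j.val)

/-- The canonical reductive complement `𝔪`: skew matrices with `S₂₃ = 0` and `S_{ij} = 0`
for all `i,j ≥ 4` (1-based). -/
def inM (X : Matrix (Fin n) (Fin n) ℝ) : Prop :=
  Xᵀ = -X ∧ (∀ i j : Fin n, i.val = 1 → j.val = 2 → X i j = 0) ∧
    ∀ i j : Fin n, 3 ≤ i.val → 3 ≤ j.val → X i j = 0

/-- `𝔪₁`: only `S₁₂`, `S₁₃` (and skew partners) may be nonzero. -/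
def inM1 (X : Matrix (Fin n) (Fin n) ℝ) : Prop :=
  Xᵀ = -X ∧ ∀ i j : Fin n, X i j ≠ 0 →
    (i.val = 0 ∧ (j.val = 1 ∨ j.val = 2)) ∨ (j.val = 0 ∧ (i.val = 1 ∨ i.val = 2))

/-- `𝔪₂`: only `S_{2j}`, `S_{3j}` for `j ≥ 4` (and skew partners) may be nonzero. -/
def inM2 (X : Matrix (Fin n) (Fin n) ℝ) : Prop :=
  Xᵀ = -X ∧ ∀ i j : Fin n, X i j ≠ 0 →
    ((i.val = 1 ∨ i.val = 2) ∧ 3 ≤ j.val) ∨ ((j.val = 1 ∨ j.val = 2) ∧ 3 ≤ i.val)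

/-- `𝔪₃`: only `S_{1j}` for `j ≥ 4` (and skew partners) may be nonzero. -/
def inM3 (X : Matrix (Fin n) (Fin n) ℝ) : Prop :=
  Xᵀ = -X ∧ ∀ i j : Fin n, X i j ≠ 0 →
    (i.val = 0 ∧ 3 ≤ j.val) ∨ (j.val = 0 ∧ 3 ≤ i.val)

/-- Component along `𝔪₁` of the decomposition `𝔪 = 𝔪₁ ⊕ 𝔪₂ ⊕ 𝔪₃` (entrywise). -/
def p1 (X : Matrix (Fin n) (Fin n) ℝ) : Matrix (Fin n) (Fin n) ℝ :=
  Matrix.of fun i j =>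
    if (i.val = 0 ∧ (j.val = 1 ∨ j.val = 2)) ∨ (j.val = 0 ∧ (i.val = 1 ∨ i.val = 2))
    then X i j else 0

/-- Component along `𝔪₂`. -/
def p2 (X : Matrix (Fin n) (Fin n) ℝ) : Matrix (Fin n) (Fin n) ℝ :=
  Matrix.of fun i j =>
    if ((i.val = 1 ∨ i.val = 2) ∧ 3 ≤ j.val) ∨ ((j.val = 1 ∨ j.val = 2) ∧ 3 ≤ i.val)
    then X i j else 0

/-- Component along `𝔪₃`. -/
def p3 (X : Matrix (Fin n) (Fin n) ℝ) : Matrix (Fin n) (Fin n) ℝ :=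
  Matrix.of fun i j =>
    if (i.val = 0 ∧ 3 ≤ j.val) ∨ (j.val = 0 ∧ 3 ≤ i.val) then X i j else 0

/-- Projection of `so(n)` onto `𝔪` along `𝔥` (kills the entries at `𝔥`-positions). -/
def pM (X : Matrix (Fin n) (Fin n) ℝ) : Matrix (Fin n) (Fin n) ℝ :=
  Matrix.of fun i j =>
    if (i.val = 1 ∧ j.val = 2) ∨ (i.val = 2 ∧ j.val = 1) ∨ (3 ≤ i.val ∧ 3 ≤ j.val)
    then 0 else X i j

/-- Matrix commutator `[X,Y] = XY - YX`. -/
def br (X Y : Matrix (Fin n) (Fin n) ℝ) : Matrix (Fin n) (Fin n) ℝ := X * Y - Y * X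

/-- The naturally reductive metric `g₀(X,Y) = (n-1)·Tr(XᵀY)`. -/
noncomputable def g0 (X Y : Matrix (Fin n) (Fin n) ℝ) : ℝ :=
  ((n : ℝ) - 1) * (Xᵀ * Y).trace

/-- The invariant metric with characteristic numbers `(s,t)`:
`g_{s,t}(X,Y) = g₀(X₁,Y₁) + s·g₀(X₂,Y₂) + t·g₀(X₃,Y₃)`. -/
noncomputable def gst (s t : ℝ) (X Y : Matrix (Fin n) (Fin n) ℝ) : ℝ :=
  g0 (p1 X) (p1 Y) + s * g0 (p2 X) (p2 Y) + t * g0 (p3 X) (p3 Y)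

/-- The symmetric part `U_{s,t}` of the Nomizu function of the Levi-Civita connection of
`g_{s,t}`. -/
noncomputable def Ust (s t : ℝ) (X Y : Matrix (Fin n) (Fin n) ℝ) :
    Matrix (Fin n) (Fin n) ℝ :=
  ((t - s) / 2) • (br (p2 X) (p3 Y) + br (p2 Y) (p3 X)) +
  ((t - 1) / (2 * s)) • (br (p1 X) (p3 Y) + br (p1 Y) (p3 X)) +
  ((s - 1) / (2 * t)) • (br (p1 X) (p2 Y) + br (p1 Y) (p2 X))

/-- The block-diagonal matrix `B₄ = diag(1, [[0,1],[-1,0]], -1, …, -1)`. -/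
def B4 : Matrix (Fin n) (Fin n) ℝ :=
  Matrix.of fun i j =>
    if i.val = 0 ∧ j.val = 0 then 1
    else if i.val = 1 ∧ j.val = 2 then 1
    else if i.val = 2 ∧ j.val = 1 then -1
    else if 3 ≤ i.val ∧ i = j then -1
    else 0

/-- `θ = dΦ|𝔪` for the order-4 automorphism: `θ(X) = B₄ X B₄ᵀ`. -/
def th4 (X : Matrix (Fin n) (Fin n) ℝ) : Matrix (Fin n) (Fin n) ℝ := B4 * X * B4ᵀ

/-- The canonical f-structure `f₀ = (1/2)(θ - θ³)` of the 4-symmetric space. -/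
noncomputable def f0 (X : Matrix (Fin n) (Fin n) ℝ) : Matrix (Fin n) (Fin n) ℝ :=
  (1 / 2 : ℝ) • (th4 X - th4 (th4 (th4 X)))

/-- The block-diagonal matrix `B₆ = diag(1, [[1/2,√3/2],[-√3/2,1/2]], -1, …, -1)`. -/
noncomputable def B6 : Matrix (Fin n) (Fin n) ℝ :=
  Matrix.of fun i j =>
    if i.val = 0 ∧ j.val = 0 then 1
    else if i.val = 1 ∧ j.val = 1 then 1 / 2
    else if i.val = 1 ∧ j.val = 2 then Real.sqrt 3 / 2
    else if i.val = 2 ∧ j.val = 1 then -(Real.sqrt 3 / 2)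
    else if i.val = 2 ∧ j.val = 2 then 1 / 2
    else if 3 ≤ i.val ∧ i = j then -1
    else 0

/-- `θ = dΦ|𝔪` for the order-6 automorphism: `θ(X) = B₆ X B₆ᵀ`. -/
noncomputable def th6 (X : Matrix (Fin n) (Fin n) ℝ) : Matrix (Fin n) (Fin n) ℝ :=
  B6 * X * B6ᵀ

/-- `f₁ = (1/√3)(θ - θ⁵)`. -/
noncomputable def f1 (X : Matrix (Fin n) (Fin n) ℝ) : Matrix (Fin n) (Fin n) ℝ :=
  (1 / Real.sqrt 3) • (th6 X - th6 (th6 (th6 (th6 (th6 X)))))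

/-- `f₂ = (1/(2√3))(θ - θ² + θ⁴ - θ⁵)`. -/
noncomputable def f2 (X : Matrix (Fin n) (Fin n) ℝ) : Matrix (Fin n) (Fin n) ℝ :=
  (1 / (2 * Real.sqrt 3)) •
    (th6 X - th6 (th6 X) + th6 (th6 (th6 (th6 X))) - th6 (th6 (th6 (th6 (th6 X)))))

/-- `f₃ = (1/(2√3))(θ + θ² - θ⁴ - θ⁵)`. -/
noncomputable def f3 (X : Matrix (Fin n) (Fin n) ℝ) : Matrix (Fin n) (Fin n) ℝ :=
  (1 / (2 * Real.sqrt 3)) •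
    (th6 X + th6 (th6 X) - th6 (th6 (th6 (th6 X))) - th6 (th6 (th6 (th6 (th6 X)))))

/-- `f₄ = (1/√3)(θ² - θ⁴)`. -/
noncomputable def f4 (X : Matrix (Fin n) (Fin n) ℝ) : Matrix (Fin n) (Fin n) ℝ :=
  (1 / Real.sqrt 3) • (th6 (th6 X) - th6 (th6 (th6 (th6 X))))

/-- The Killing f-structure condition for `f` w.r.t. the metric with characteristic
numbers `(s,t)`: `(1/2)[X, fX]_𝔪 + U_{s,t}(X, fX) - f(U_{s,t}(X,X)) = 0` for all `X ∈ 𝔪`. -/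
def killCond (s t : ℝ) (f : Matrix (Fin n) (Fin n) ℝ → Matrix (Fin n) (Fin n) ℝ) : Prop :=
  ∀ X : Matrix (Fin n) (Fin n) ℝ, inM X →
    (1 / 2 : ℝ) • pM (br X (f X)) + Ust s t X (f X) - f (Ust s t X X) = 0

/-- The nearly Kähler f-structure condition:
`(1/2)[fX, f²X]_𝔪 + U_{s,t}(fX, f²X) - f(U_{s,t}(fX, fX)) = 0` for all `X ∈ 𝔪`. -/
def nkCond (s t : ℝ) (f : Matrix (Fin n) (Fin n) ℝ → Matrix (Fin n) (Fin n) ℝ) : Prop :=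
  ∀ X : Matrix (Fin n) (Fin n) ℝ, inM X →
    (1 / 2 : ℝ) • pM (br (f X) (f (f X))) + Ust s t (f X) (f (f X)) -
      f (Ust s t (f X) (f X)) = 0

/-- The `G₁f` condition:
`f(2·U_{s,t}(fX, f²X) - f(U_{s,t}(fX, fX)) + f(U_{s,t}(f²X, f²X))) = 0` for all `X ∈ 𝔪`. -/
def g1Cond (s t : ℝ) (f : Matrix (Fin n) (Fin n) ℝ → Matrix (Fin n) (Fin n) ℝ) : Prop :=
  ∀ X : Matrix (Fin n) (Fin n) ℝ, inM X →
    f ((2 : ℝ) • Ust s t (f X) (f (f X)) - f (Ust s t (f X) (f X)) +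
      f (Ust s t (f (f X)) (f (f X)))) = 0

end FlagMfld

open FlagMfld

/-!
Split the indices into the blocks `{1}`, `{2, 3}` and `{4, …, n}`. Each `𝔪ᵢ` consists of the
skew-symmetric matrices supported on one unordered pair of distinct blocks. A nonzero product
`Xᵢₖ Yₖⱼ` with `X` on the pair `{a, b}` and `Y` on the pair `{b, c}`, `a ≠ c`, forces `k` to lie in
the shared block `b`, so that `i` is in `a` and `j` in `c`; hence `[X, Y]` lives on the third pair.
-/

namespace FlagMfld

section BlockSupport

variable {ι κ R : Type*} {β : ι → κ}

/-- The matrix `X` has nonzero entries only at positions `(i, j)` whose two blocks `β i` and `β j`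
form the unordered pair `p`; here `β` assigns to each index its block. -/
def IsBlockSupported [Zero R] (β : ι → κ) (p : Sym2 κ) (X : Matrix ι ι R) : Prop :=
  ∀ i j, X i j ≠ 0 → s(β i, β j) = p

theorem IsBlockSupported.sub [SubNegZeroMonoid R] {p : Sym2 κ} {X Y : Matrix ι ι R}
    (hX : IsBlockSupported β p X) (hY : IsBlockSupported β p Y) :
    IsBlockSupported β p (X - Y) := by
  intro i j hij
  by_cases hXij : X i j = 0
  · exact hY i j fun hYij => hij (by rw [Matrix.sub_apply, hXij, hYij, sub_zero])
  · exact hX i j hXij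

theorem IsBlockSupported.mul [Fintype ι] [NonUnitalNonAssocSemiring R] {a b c : κ}
    {X Y : Matrix ι ι R} (hX : IsBlockSupported β s(a, b) X)
    (hY : IsBlockSupported β s(b, c) Y) (hca : c ≠ a) :
    IsBlockSupported β s(c, a) (X * Y) := by
  intro i j hij
  obtain ⟨k, -, hk⟩ := Finset.exists_ne_zero_of_sum_ne_zero hij
  have hik := hX i k (left_ne_zero_of_mul hk)
  have hkj := hY k j (right_ne_zero_of_mul hk)
  have hkb : β k = b := by
    have hkab : β k ∈ s(a, b) := hik ▸ Sym2.mem_mk_right _ _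
    have hkbc : β k ∈ s(b, c) := hkj ▸ Sym2.mem_mk_left _ _
    grind
  have hi : β i = a := Sym2.congr_left.mp (hkb ▸ hik)
  have hj : β j = c := Sym2.congr_right.mp (hkb ▸ hkj)
  rw [hi, hj, Sym2.eq_swap]

theorem IsBlockSupported.lie [Fintype ι] [NonUnitalNonAssocRing R] {a b c : κ} {X Y : Matrix ι ι R}
    (hX : IsBlockSupported β s(a, b) X) (hY : IsBlockSupported β s(b, c) Y) (hca : c ≠ a) :
    IsBlockSupported β s(c, a) ⁅X, Y⁆ := by
  have hYX : IsBlockSupported β s(c, a) (Y * X) := by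
    rw [Sym2.eq_swap] at hX hY ⊢
    exact hY.mul hX hca.symm
  exact (hX.mul hY hca).sub hYX

end BlockSupport

section SkewBlock

open LieAlgebra.Orthogonal

attribute [local instance] LieRing.ofAssociativeRing

variable {ι κ R : Type*} [Fintype ι] [DecidableEq ι] [CommRing R] {β : ι → κ}

/-- The skew-symmetric matrices supported on the pair of blocks `p`, the common form of the
subspaces `𝔪₁`, `𝔪₂`, `𝔪₃`. -/
def IsSkewBlock (β : ι → κ) (p : Sym2 κ) (X : Matrix ι ι R) : Prop :=
  X ∈ so ι R ∧ IsBlockSupported β p X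

theorem IsSkewBlock.lie {a b c : κ} {X Y : Matrix ι ι R} (hX : IsSkewBlock β s(a, b) X)
    (hY : IsSkewBlock β s(b, c) Y) (hca : c ≠ a) : IsSkewBlock β s(c, a) ⁅X, Y⁆ :=
  ⟨(so ι R).lie_mem hX.1 hY.1, hX.2.lie hY.2 hca⟩

end SkewBlock

section FlagBlocks

variable {n : ℕ}

/-- The blocks `{1}`, `{2, 3}`, `{4, …, n}` of the index set (1-based), numbered `0`, `1`, `2`. -/
def flagBlock (i : Fin n) : Fin 3 :=
  if i.val = 0 then 0 else if i.val ≤ 2 then 1 else 2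

theorem flagBlock_eq_zero_iff {i : Fin n} : flagBlock i = 0 ↔ i.val = 0 := by
  grind [flagBlock]

theorem flagBlock_eq_one_iff {i : Fin n} : flagBlock i = 1 ↔ i.val = 1 ∨ i.val = 2 := by
  grind [flagBlock]

theorem flagBlock_eq_two_iff {i : Fin n} : flagBlock i = 2 ↔ 3 ≤ i.val := by
  grind [flagBlock]

variable {X : Matrix (Fin n) (Fin n) ℝ}

theorem inM1_iff_isSkewBlock : inM1 X ↔ IsSkewBlock flagBlock s(0, 1) X := by
  simp only [inM1, IsSkewBlock, IsBlockSupported, LieAlgebra.Orthogonal.mem_so, Sym2.eq_iff,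
    flagBlock_eq_zero_iff, flagBlock_eq_one_iff, and_comm]

theorem inM2_iff_isSkewBlock : inM2 X ↔ IsSkewBlock flagBlock s(1, 2) X := by
  simp only [inM2, IsSkewBlock, IsBlockSupported, LieAlgebra.Orthogonal.mem_so, Sym2.eq_iff,
    flagBlock_eq_one_iff, flagBlock_eq_two_iff, and_comm]

theorem inM3_iff_isSkewBlock : inM3 X ↔ IsSkewBlock flagBlock s(2, 0) X := by
  simp only [inM3, IsSkewBlock, IsBlockSupported, LieAlgebra.Orthogonal.mem_so, Sym2.eq_iff,
    flagBlock_eq_zero_iff, flagBlock_eq_two_iff, and_comm, or_comm]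

theorem br_eq_lie (X Y : Matrix (Fin n) (Fin n) ℝ) : br X Y = ⁅X, Y⁆ :=
  rfl

end FlagBlocks

end FlagMfld

/-- `[𝔪₁,𝔪₂] ⊆ 𝔪₃`, `[𝔪₂,𝔪₃] ⊆ 𝔪₁`, `[𝔪₃,𝔪₁] ⊆ 𝔪₂`. -/
theorem statement4 (n : ℕ) (hn : 4 ≤ n) :
    (∀ X Y : Matrix (Fin n) (Fin n) ℝ, inM1 X → inM2 Y → inM3 (br X Y)) ∧
    (∀ X Y : Matrix (Fin n) (Fin n) ℝ, inM2 X → inM3 Y → inM1 (br X Y)) ∧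
    (∀ X Y : Matrix (Fin n) (Fin n) ℝ, inM3 X → inM1 Y → inM2 (br X Y)) := by
  simp only [inM1_iff_isSkewBlock, inM2_iff_isSkewBlock, inM3_iff_isSkewBlock, br_eq_lie]
  exact ⟨fun _ _ hX hY => hX.lie hY (by decide),
    fun _ _ hX hY => hX.lie hY (by decide),
    fun _ _ hX hY => hX.lie hY (by decide)⟩
end

section
/- Let V be a finite-dimensional real vector space and θ : V → V a linear map with θ⁶ = id. Then each of the operators f₁ := (1/√3)(θ − θ⁵), f₂ := (1/(2√3))(θ − θ² + θ⁴ − θ⁵), f₃ := (1/(2√3))(θ + θ² − θ⁴ − θ⁵), f₄ := (1/√3)(θ² − θ⁴) satisfies f³ + f = 0 (i.e. each is an f-structure). Moreover P₃ := θ³ satisfies P₃² = id, and if in addition θ has no nonzero fixed vector, then P₂ := (1/3)θ + θ² + (1/3)θ³ + θ⁴ + (1/3)θ⁵ satisfies P₂² = id. These are among the canonical f-structures and canonical almost product structures of a homogeneous Φ-space of order 6. -/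
/-!
Since `θ⁵ = θ⁻¹` and `θ⁴ = θ⁻²`, the operators `f₁` and `f₄` have the shape `(u - u⁻¹) / √3` with
`u³ = u⁻³`. Expanding the cube gives `(u - u⁻¹)³ = u³ - u⁻³ - 3 (u - u⁻¹) = -3 (u - u⁻¹)`, so both
are f-structures. Moreover `f₁² = f₄²`, and half the sum of two commuting f-structures with equal
squares is again an f-structure: this gives `f₃ = (f₁ + f₄) / 2`. Replacing `θ` by `-θ` turns `f₃`
into `-f₂`.

Without fixed vectors, `1 + θ + ⋯ + θ⁵ = 0`, so that `P₂ = 2e - 1`, where `e = (1 + θ² + θ⁴) / 3` is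
idempotent as the average of the powers of an element of order dividing `3`.
-/

/-- Yano's notion of an f-structure, for an element of an arbitrary ring; an f-structure on a vector
space is the case of its endomorphism ring. -/
def IsFStructure {A : Type*} [Ring A] (f : A) : Prop :=
  f ^ 3 + f = 0

section Ring

variable {A : Type*} [Ring A]

theorem sub_pow_three_of_mul_eq_one {u v : A} (huv : u * v = 1) (hvu : v * u = 1) :
    (u - v) ^ 3 = u ^ 3 - v ^ 3 - 3 • (u - v) := by
  simp only [pow_succ, pow_zero, one_mul, sub_mul, mul_sub, huv, hvu, mul_assoc, mul_one]
  abel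

theorem sub_sq_of_mul_eq_one {u v : A} (huv : u * v = 1) (hvu : v * u = 1) :
    (u - v) ^ 2 = u ^ 2 + v ^ 2 - 2 • 1 := by
  simp only [sq, sub_mul, mul_sub, huv, hvu]
  abel

theorem add_pow_three_of_commute_of_sq_eq {f g : A} (hcomm : Commute f g) (hsq : f ^ 2 = g ^ 2) :
    (f + g) ^ 3 = 4 • (f ^ 3 + g ^ 3) := by
  have hffg : f ^ 2 * g = g ^ 3 := by rw [hsq, ← pow_succ]
  have hfgg : f * g ^ 2 = f ^ 3 := by rw [← hsq, ← pow_succ']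
  have hgfg : g * (f * g) = f * g ^ 2 := by rw [← mul_assoc, ← hcomm.eq, mul_assoc, sq]
  calc
    (f + g) ^ 3 = f ^ 3 + 3 • (f ^ 2 * g) + 3 • (f * g ^ 2) + g ^ 3 := by
      simp only [pow_succ, pow_zero, one_mul, add_mul, mul_add, mul_assoc, ← hcomm.eq] at hgfg ⊢
      rw [hgfg]
      abel
    _ = f ^ 3 + 3 • g ^ 3 + 3 • f ^ 3 + g ^ 3 := by rw [hffg, hfgg]
    _ = 4 • (f ^ 3 + g ^ 3) := by abel

theorem pow_mul_geom_sum_of_pow_eq_one {t : A} {n : ℕ} (ht : t ^ n = 1) (k : ℕ) :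
    t ^ k * ∑ i ∈ Finset.range n, t ^ i = ∑ i ∈ Finset.range n, t ^ i := by
  have hfix : t * ∑ i ∈ Finset.range n, t ^ i = ∑ i ∈ Finset.range n, t ^ i := by
    rw [← sub_eq_zero, ← sub_one_mul, mul_geom_sum, ht, sub_self]
  induction k with
  | zero => rw [pow_zero, one_mul]
  | succ k ih => rw [pow_succ, mul_assoc, hfix, ih]

theorem two_nsmul_sub_one_sq_of_isIdempotentElem {e : A} (he : IsIdempotentElem e) :
    (2 • e - 1) ^ 2 = 1 := by
  simp only [sq, two_nsmul, sub_mul, mul_sub, add_mul, mul_add, he.eq, one_mul, mul_one]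
  abel

theorem IsFStructure.neg {f : A} (hf : IsFStructure f) : IsFStructure (-f) := by
  rw [IsFStructure, Odd.neg_pow (by decide), ← neg_add, hf, neg_zero]

end Ring

theorem geom_sum_eq_zero_of_forall_fixed_eq_zero {R V : Type*} [Ring R] [AddCommGroup V]
    [Module R V] {θ : Module.End R V} {n : ℕ} (hθ : θ ^ n = 1) (hfix : ∀ v, θ v = v → v = 0) :
    ∑ i ∈ Finset.range n, θ ^ i = 0 := by
  ext v
  apply hfix
  have h := pow_mul_geom_sum_of_pow_eq_one hθ 1
  rw [pow_one] at h
  rw [← Module.End.mul_apply, h]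

section Algebra

variable {K A : Type*} [Field K] [Ring A] [Algebra K A]

theorem isFStructure_smul_sub {u v : A} {s : K} (hs : s ^ 2 = 3) (hs0 : s ≠ 0)
    (huv : u * v = 1) (hvu : v * u = 1) (hcube : u ^ 3 = v ^ 3) :
    IsFStructure ((1 / s) • (u - v)) := by
  have hcoeff : (1 / s) ^ 3 * 3 = 1 / s := by
    rw [← hs]
    field_simp
  have hsub : (u - v) ^ 3 = -((3 : K) • (u - v)) := by
    rw [sub_pow_three_of_mul_eq_one huv hvu, hcube, sub_self, zero_sub, ofNat_smul_eq_nsmul K]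
  rw [IsFStructure, smul_pow, hsub, smul_neg, smul_smul, hcoeff, neg_add_cancel]

theorem IsFStructure.half_smul_add {f g : A} (h2 : (2 : K) ≠ 0) (hf : IsFStructure f)
    (hg : IsFStructure g) (hcomm : Commute f g) (hsq : f ^ 2 = g ^ 2) :
    IsFStructure ((1 / 2 : K) • (f + g)) := by
  have hadd : (f + g) ^ 3 = -((4 : K) • (f + g)) := by
    rw [add_pow_three_of_commute_of_sq_eq hcomm hsq, eq_neg_of_add_eq_zero_left hf,
      eq_neg_of_add_eq_zero_left hg, ofNat_smul_eq_nsmul K, ← neg_add, smul_neg]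
  have hcoeff : (1 / 2 : K) ^ 3 * 4 = 1 / 2 := by
    field_simp
    norm_num
  rw [IsFStructure, smul_pow, hadd, smul_neg, smul_smul, hcoeff, neg_add_cancel]

theorem isIdempotentElem_average_pow {t : A} {n : ℕ} (ht : t ^ n = 1) (hn : (n : K) ≠ 0) :
    IsIdempotentElem ((1 / n : K) • ∑ i ∈ Finset.range n, t ^ i) := by
  have hsq : (∑ i ∈ Finset.range n, t ^ i) * ∑ i ∈ Finset.range n, t ^ i =
      (n : K) • ∑ i ∈ Finset.range n, t ^ i := by
    simp only [Finset.sum_mul, pow_mul_geom_sum_of_pow_eq_one ht, Finset.sum_const,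
      Finset.card_range, Nat.cast_smul_eq_nsmul]
  rw [IsIdempotentElem, smul_mul_smul_comm, hsq, smul_smul, mul_assoc, one_div_mul_cancel hn,
    mul_one]

theorem isFStructure_smul_self_sub_pow_five {t : A} (ht : t ^ 6 = 1) {s : K} (hs : s ^ 2 = 3)
    (hs0 : s ≠ 0) : IsFStructure ((1 / s) • (t - t ^ 5)) :=
  isFStructure_smul_sub hs hs0 (by rw [← pow_succ', ht]) (by rw [← pow_succ, ht])
    (by rw [← pow_mul, pow_eq_pow_mod (5 * 3) ht])

theorem isFStructure_smul_sq_sub_pow_four {t : A} (ht : t ^ 6 = 1) {s : K} (hs : s ^ 2 = 3)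
    (hs0 : s ≠ 0) : IsFStructure ((1 / s) • (t ^ 2 - t ^ 4)) :=
  isFStructure_smul_sub hs hs0 (by rw [← pow_add, ht]) (by rw [← pow_add, ht])
    (by rw [← pow_mul, ← pow_mul, pow_eq_pow_mod (4 * 3) ht, ht, pow_zero])

theorem self_sub_pow_five_sq_eq {t : A} (ht : t ^ 6 = 1) :
    (t - t ^ 5) ^ 2 = (t ^ 2 - t ^ 4) ^ 2 := by
  rw [sub_sq_of_mul_eq_one (by rw [← pow_succ', ht]) (by rw [← pow_succ, ht]),
    sub_sq_of_mul_eq_one (by rw [← pow_add, ht]) (by rw [← pow_add, ht]),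
    ← pow_mul, ← pow_mul, ← pow_mul, pow_eq_pow_mod (5 * 2) ht, pow_eq_pow_mod (4 * 2) ht,
    add_comm (t ^ 2)]

theorem commute_self_sub_pow_five_sq_sub_pow_four (t : A) :
    Commute (t - t ^ 5) (t ^ 2 - t ^ 4) :=
  ((Commute.self_pow t 2).sub_right (Commute.self_pow t 4)).sub_left
    ((Commute.pow_pow_self t 5 2).sub_right (Commute.pow_pow_self t 5 4))

theorem isFStructure_smul_add_sq_sub_pow_four_sub_pow_five {t : A} (ht : t ^ 6 = 1) {s : K}
    (hs : s ^ 2 = 3) (hs0 : s ≠ 0) (h2 : (2 : K) ≠ 0) :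
    IsFStructure ((1 / (2 * s)) • (t + t ^ 2 - t ^ 4 - t ^ 5)) := by
  have hhalf : (1 / (2 * s)) • (t + t ^ 2 - t ^ 4 - t ^ 5) =
      (1 / 2 : K) • ((1 / s) • (t - t ^ 5) + (1 / s) • (t ^ 2 - t ^ 4)) := by
    rw [← smul_add, smul_smul, one_div_mul_one_div]
    congr 1
    abel
  rw [hhalf]
  exact (isFStructure_smul_self_sub_pow_five ht hs hs0).half_smul_add h2
    (isFStructure_smul_sq_sub_pow_four ht hs hs0)
    (((commute_self_sub_pow_five_sq_sub_pow_four t).smul_left _).smul_right _)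
    (by rw [smul_pow, smul_pow, self_sub_pow_five_sq_eq ht])

theorem isFStructure_smul_sub_sq_add_pow_four_sub_pow_five {t : A} (ht : t ^ 6 = 1) {s : K}
    (hs : s ^ 2 = 3) (hs0 : s ≠ 0) (h2 : (2 : K) ≠ 0) :
    IsFStructure ((1 / (2 * s)) • (t - t ^ 2 + t ^ 4 - t ^ 5)) := by
  have hneg : (1 / (2 * s)) • (t - t ^ 2 + t ^ 4 - t ^ 5) =
      -((1 / (2 * s)) • (-t + (-t) ^ 2 - (-t) ^ 4 - (-t) ^ 5)) := by
    rw [← smul_neg, Even.neg_pow (by decide : Even 2), Even.neg_pow (by decide : Even 4),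
      Odd.neg_pow (by decide : Odd 5)]
    congr 1
    abel
  rw [hneg]
  have hneg6 : (-t) ^ 6 = 1 := by rw [Even.neg_pow (by decide), ht]
  exact (isFStructure_smul_add_sq_sub_pow_four_sub_pow_five hneg6 hs hs0 h2).neg

theorem third_smul_odd_add_even_sq_eq_one {t : A} (ht : ∑ i ∈ Finset.range 6, t ^ i = 0)
    (h3 : (3 : K) ≠ 0) :
    ((1 / 3 : K) • t + t ^ 2 + (1 / 3 : K) • t ^ 3 + t ^ 4 + (1 / 3 : K) • t ^ 5) ^ 2 = 1 := by
  have ht6 : t ^ 6 = 1 := by rw [← sub_eq_zero, ← mul_geom_sum, ht, mul_zero]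
  have hsum : ∑ i ∈ Finset.range 3, (t ^ 2) ^ i = 1 + t ^ 2 + t ^ 4 := by
    simp only [Finset.sum_range_succ, Finset.sum_range_zero, ← pow_mul, zero_add, mul_zero,
      pow_zero, mul_one, Nat.reduceMul]
  obtain ⟨e, he⟩ : ∃ e, e = (1 / 3 : K) • (1 + t ^ 2 + t ^ 4) := ⟨_, rfl⟩
  have hidem : IsIdempotentElem e := by
    rw [he, ← hsum]
    exact isIdempotentElem_average_pow (n := 3) (by rw [← pow_mul, ht6]) h3
  have heven : t ^ 2 + t ^ 4 = 3 • e - 1 := by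
    rw [he, ← ofNat_smul_eq_nsmul K, smul_smul, mul_one_div_cancel h3, one_smul]
    abel
  have hodd : t + t ^ 3 + t ^ 5 = -(1 + t ^ 2 + t ^ 4) := by
    rw [eq_neg_iff_add_eq_zero, ← ht]
    simp only [Finset.sum_range_succ, Finset.sum_range_zero, pow_zero, pow_one]
    abel
  have hreflection :
      (1 / 3 : K) • t + t ^ 2 + (1 / 3 : K) • t ^ 3 + t ^ 4 + (1 / 3 : K) • t ^ 5 = 2 • e - 1 :=
    calc
      _ = (1 / 3 : K) • (t + t ^ 3 + t ^ 5) + (t ^ 2 + t ^ 4) := by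
        simp only [smul_add]
        abel
      _ = -e + (3 • e - 1) := by rw [hodd, heven, smul_neg, he]
      _ = 2 • e - 1 := by abel
  rw [hreflection, two_nsmul_sub_one_sq_of_isIdempotentElem hidem]

end Algebra

theorem statement7_general {K V : Type*} [Field K] [AddCommGroup V] [Module K V]
    (h2 : (2 : K) ≠ 0) (h3 : (3 : K) ≠ 0) {s : K} (hs : s ^ 2 = 3)
    (θ : V →ₗ[K] V) (hθ : θ ^ 6 = 1) :
    ((1 / s) • (θ - θ ^ 5)) ^ 3 + (1 / s) • (θ - θ ^ 5) = 0 ∧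
    ((1 / (2 * s)) • (θ - θ ^ 2 + θ ^ 4 - θ ^ 5)) ^ 3 +
      (1 / (2 * s)) • (θ - θ ^ 2 + θ ^ 4 - θ ^ 5) = 0 ∧
    ((1 / (2 * s)) • (θ + θ ^ 2 - θ ^ 4 - θ ^ 5)) ^ 3 +
      (1 / (2 * s)) • (θ + θ ^ 2 - θ ^ 4 - θ ^ 5) = 0 ∧
    ((1 / s) • (θ ^ 2 - θ ^ 4)) ^ 3 + (1 / s) • (θ ^ 2 - θ ^ 4) = 0 ∧
    (θ ^ 3) ^ 2 = 1 ∧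
    ((∀ v : V, θ v = v → v = 0) →
      ((1 / 3 : K) • θ + θ ^ 2 + (1 / 3 : K) • θ ^ 3 + θ ^ 4 + (1 / 3 : K) • θ ^ 5) ^ 2 = 1) := by
  have hs0 : s ≠ 0 := by
    rintro rfl
    exact h3 (by rw [← hs, zero_pow two_ne_zero])
  exact ⟨isFStructure_smul_self_sub_pow_five hθ hs hs0,
    isFStructure_smul_sub_sq_add_pow_four_sub_pow_five hθ hs hs0 h2,
    isFStructure_smul_add_sq_sub_pow_four_sub_pow_five hθ hs hs0 h2,
    isFStructure_smul_sq_sub_pow_four hθ hs hs0,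
    by rw [← pow_mul, hθ],
    fun hfix ↦ third_smul_odd_add_even_sq_eq_one
      (geom_sum_eq_zero_of_forall_fixed_eq_zero hθ hfix) h3⟩

/-- If `θ : V → V` is a linear map of a finite-dimensional real vector
space with `θ⁶ = id`, then each of
`f₁ = (1/√3)(θ - θ⁵)`, `f₂ = (1/(2√3))(θ - θ² + θ⁴ - θ⁵)`,
`f₃ = (1/(2√3))(θ + θ² - θ⁴ - θ⁵)`, `f₄ = (1/√3)(θ² - θ⁴)` satisfies `f³ + f = 0`;
moreover `P₃ = θ³` satisfies `P₃² = id`, and if `θ` has no nonzero fixed vector then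
`P₂ = (1/3)θ + θ² + (1/3)θ³ + θ⁴ + (1/3)θ⁵` satisfies `P₂² = id`. -/
theorem statement7 (V : Type*) [AddCommGroup V] [Module ℝ V] [FiniteDimensional ℝ V]
    (θ : V →ₗ[ℝ] V) (hθ : θ ^ 6 = 1) :
    ((1 / Real.sqrt 3) • (θ - θ ^ 5)) ^ 3 + (1 / Real.sqrt 3) • (θ - θ ^ 5) = 0 ∧
    ((1 / (2 * Real.sqrt 3)) • (θ - θ ^ 2 + θ ^ 4 - θ ^ 5)) ^ 3 +
      (1 / (2 * Real.sqrt 3)) • (θ - θ ^ 2 + θ ^ 4 - θ ^ 5) = 0 ∧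
    ((1 / (2 * Real.sqrt 3)) • (θ + θ ^ 2 - θ ^ 4 - θ ^ 5)) ^ 3 +
      (1 / (2 * Real.sqrt 3)) • (θ + θ ^ 2 - θ ^ 4 - θ ^ 5) = 0 ∧
    ((1 / Real.sqrt 3) • (θ ^ 2 - θ ^ 4)) ^ 3 + (1 / Real.sqrt 3) • (θ ^ 2 - θ ^ 4) = 0 ∧
    (θ ^ 3) ^ 2 = 1 ∧
    ((∀ v : V, θ v = v → v = 0) →
      ((1 / 3 : ℝ) • θ + θ ^ 2 + (1 / 3 : ℝ) • θ ^ 3 + θ ^ 4 + (1 / 3 : ℝ) • θ ^ 5) ^ 2 = 1) :=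
  statement7_general two_ne_zero three_ne_zero (Real.sq_sqrt zero_le_three) θ hθ
end

section
/- The map θ(X) = B₄ X B₄ᵀ maps 𝔪 into itself, and the canonical f-structure f₀ = (1/2)(θ − θ³) of the 4-symmetric space SO(n)/SO(2)×SO(n−3) acts on S ∈ 𝔪 as follows: (f₀S)₁₂ = S₁₃, (f₀S)₁₃ = −S₁₂, (f₀S)_{2j} = −S_{3j} and (f₀S)_{3j} = S_{2j} for all j ≥ 4, and (f₀S)_{1j} = 0 for all j ≥ 4 (all remaining entries determined by skew-symmetry). In particular f₀³ + f₀ = 0 on 𝔪. -/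
open Matrix

open FlagMfld

/-!
`B₄` is a signed permutation matrix: up to the row signs it exchanges the coordinates `2` and `3`.
Conjugation by it therefore permutes matrix entries up to sign, `θ⁴ = 1`, and `θ³ = θ⁻¹` applies
the same permutation of entries as `θ` with other signs. So `f₀ = (1/2)(θ - θ³)` keeps precisely
the permuted entries on which these signs differ. The identity `f₀³ = -f₀` only uses `θ⁴ = 1`:
`(θ - θ³)³ = -4(θ - θ³)` in any ring.
-/

namespace FlagMfld

lemma sub_cube_cube_of_pow_four_eq_one {A : Type*} [Ring A] {T : A} (hT : T ^ 4 = 1) :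
    (T - T ^ 3) ^ 3 = -(4 * (T - T ^ 3)) := by
  linear_combination (norm := noncomm_ring) (-T ^ 5 + 3 * T ^ 3 - 4 * T) * hT

lemma half_sub_cube_cube_add_self {R A : Type*} [CommRing R] [Invertible (2 : R)] [Ring A]
    [Algebra R A] {T : A} (hT : T ^ 4 = 1) :
    (⅟(2 : R) • (T - T ^ 3)) ^ 3 + ⅟(2 : R) • (T - T ^ 3) = 0 := by
  have hhalf : ⅟(2 : R) ^ 3 * 4 = ⅟2 := by
    linear_combination (2 * ⅟(2 : R) ^ 2 + ⅟2) * invOf_mul_self (2 : R)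
  have hfour : (4 : A) * (T - T ^ 3) = (4 : R) • (T - T ^ 3) := by
    rw [Algebra.smul_def, map_ofNat]
  rw [smul_pow, sub_cube_cube_of_pow_four_eq_one hT, hfour, smul_neg, smul_smul, hhalf,
    neg_add_cancel]

lemma diagonal_mul_permMatrix_conj_apply {ι R : Type*} [Fintype ι] [DecidableEq ι] [CommSemiring R]
    (d : ι → R) (σ : Equiv.Perm ι) (X : Matrix ι ι R) (i j : ι) :
    (diagonal d * σ.permMatrix R * X * (diagonal d * σ.permMatrix R)ᵀ) i j =
      d i * d j * X (σ i) (σ j) := by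
  have hconj : σ.permMatrix R * X * (σ⁻¹).permMatrix R = X.submatrix σ σ := by
    rw [PEquiv.toMatrix_toPEquiv_mul, PEquiv.mul_toMatrix_toPEquiv]
    rfl
  have hregroup : diagonal d * σ.permMatrix R * X * (diagonal d * σ.permMatrix R)ᵀ =
      diagonal d * X.submatrix σ σ * diagonal d := by
    rw [← hconj, transpose_mul, diagonal_transpose, transpose_permMatrix]
    simp only [Matrix.mul_assoc]
  rw [hregroup, mul_diagonal, diagonal_mul, submatrix_apply, mul_right_comm]

variable {n : ℕ} {i j p q : Fin n}

/-- The row signs of `B₄` viewed as a signed permutation matrix: row `i` has its only nonzero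
entry `B4Sign i` in the column obtained from `i` by exchanging the (0-based) indices `1`, `2`. -/
def B4Sign (i : Fin n) : ℝ := if i.val ≤ 1 then 1 else -1

lemma B4Sign_of_le_one (hi : i.val ≤ 1) : B4Sign i = 1 := if_pos hi

lemma B4Sign_of_one_lt (hi : 1 < i.val) : B4Sign i = -1 := if_neg hi.not_ge

lemma B4Sign_mul_self (i : Fin n) : B4Sign i * B4Sign i = 1 := by
  unfold B4Sign; split_ifs <;> norm_num

lemma B4_eq_diagonal_mul_permMatrix (hp : p.val = 1) (hq : q.val = 2) :
    (B4 : Matrix (Fin n) (Fin n) ℝ) = diagonal B4Sign * (Equiv.swap p q).permMatrix ℝ := by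
  ext i j
  simp only [diagonal_mul, Equiv.Perm.permMatrix, PEquiv.toMatrix_apply, Equiv.toPEquiv_apply,
    Option.mem_some_iff, Equiv.swap_apply_def, B4, B4Sign, of_apply, Fin.ext_iff]
  grind

lemma swap_apply_of_zero_or_three_le (hp : p.val = 1) (hq : q.val = 2)
    (hi : i.val = 0 ∨ 3 ≤ i.val) : Equiv.swap p q i = i :=
  Equiv.swap_apply_of_ne_of_ne (by grind) (by grind)

lemma th4_apply (hp : p.val = 1) (hq : q.val = 2) (X : Matrix (Fin n) (Fin n) ℝ) (i j : Fin n) :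
    th4 X i j = B4Sign i * B4Sign j * X (Equiv.swap p q i) (Equiv.swap p q j) := by
  rw [th4, B4_eq_diagonal_mul_permMatrix hp hq, diagonal_mul_permMatrix_conj_apply]

lemma th4_th4_apply (hp : p.val = 1) (hq : q.val = 2) (X : Matrix (Fin n) (Fin n) ℝ)
    (i j : Fin n) :
    th4 (th4 X) i j =
      B4Sign i * B4Sign (Equiv.swap p q i) * (B4Sign j * B4Sign (Equiv.swap p q j)) * X i j := by
  simp only [th4_apply hp hq, Equiv.swap_apply_self]
  ring

lemma th4_th4_th4_th4 (hn : 3 ≤ n) (X : Matrix (Fin n) (Fin n) ℝ) :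
    th4 (th4 (th4 (th4 X))) = X := by
  ext i j
  rw [th4_th4_apply (p := ⟨1, by omega⟩) (q := ⟨2, by omega⟩) rfl rfl,
    th4_th4_apply (p := ⟨1, by omega⟩) (q := ⟨2, by omega⟩) rfl rfl]
  grind [B4Sign_mul_self]

/-- `θ` as an endomorphism of the space of all real matrices, so that the identities satisfied by
its powers can be derived in an endomorphism algebra. -/
def thetaEnd (n : ℕ) : Module.End ℝ (Matrix (Fin n) (Fin n) ℝ) :=
  LinearMap.mulLeftRight ℝ (B4, B4ᵀ)

lemma thetaEnd_apply (X : Matrix (Fin n) (Fin n) ℝ) : thetaEnd n X = th4 X := by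
  simp only [thetaEnd, LinearMap.mulLeftRight_apply, th4]

lemma transpose_th4 (X : Matrix (Fin n) (Fin n) ℝ) : (th4 X)ᵀ = th4 Xᵀ := by
  simp only [th4, transpose_mul, transpose_transpose, Matrix.mul_assoc]

lemma th4_neg (X : Matrix (Fin n) (Fin n) ℝ) : th4 (-X) = -th4 X := by
  simp only [← thetaEnd_apply, map_neg]

lemma inM.th4 {X : Matrix (Fin n) (Fin n) ℝ} (hX : inM X) : inM (th4 X) := by
  obtain ⟨hskew, hX₁₂, hXblock⟩ := hX
  refine ⟨by rw [transpose_th4, hskew, th4_neg], fun i j hi hj ↦ ?_, fun i j hi hj ↦ ?_⟩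
  · have hX₂₁ : X j i = 0 := by
      rw [← transpose_apply X, hskew, neg_apply, hX₁₂ i j hi hj, neg_zero]
    rw [th4_apply hi hj, Equiv.swap_apply_left, Equiv.swap_apply_right, hX₂₁, mul_zero]
  · have hp : (⟨1, by omega⟩ : Fin n).val = 1 := rfl
    have hq : (⟨2, by omega⟩ : Fin n).val = 2 := rfl
    rw [th4_apply hp hq, swap_apply_of_zero_or_three_le hp hq (.inr hi),
      swap_apply_of_zero_or_three_le hp hq (.inr hj), hXblock i j hi hj, mul_zero]

lemma thetaEnd_pow_four (hn : 3 ≤ n) : thetaEnd n ^ 4 = 1 :=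
  LinearMap.ext fun X ↦ by
    simpa only [pow_succ, pow_zero, one_mul, Module.End.mul_apply, thetaEnd_apply,
      Module.End.one_apply] using th4_th4_th4_th4 hn X

lemma f0_eq_thetaEnd_apply (X : Matrix (Fin n) (Fin n) ℝ) :
    f0 X = (⅟(2 : ℝ) • (thetaEnd n - thetaEnd n ^ 3)) X := by
  simp only [f0, invOf_eq_inv, one_div, LinearMap.smul_apply, LinearMap.sub_apply, pow_succ,
    pow_zero, one_mul, Module.End.mul_apply, thetaEnd_apply]

lemma f0_f0_f0_add_f0 (hn : 3 ≤ n) (X : Matrix (Fin n) (Fin n) ℝ) :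
    f0 (f0 (f0 X)) + f0 X = 0 := by
  simp only [f0_eq_thetaEnd_apply]
  exact LinearMap.congr_fun (half_sub_cube_cube_add_self (R := ℝ) (thetaEnd_pow_four hn)) X

lemma f0_apply (hp : p.val = 1) (hq : q.val = 2) (X : Matrix (Fin n) (Fin n) ℝ) (i j : Fin n) :
    f0 X i j =
      (B4Sign i * B4Sign j - B4Sign (Equiv.swap p q i) * B4Sign (Equiv.swap p q j)) / 2 *
        X (Equiv.swap p q i) (Equiv.swap p q j) := by
  have hcube : th4 (th4 (th4 X)) i j = B4Sign (Equiv.swap p q i) * B4Sign (Equiv.swap p q j) *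
      X (Equiv.swap p q i) (Equiv.swap p q j) := by
    rw [th4_th4_apply hp hq, th4_apply hp hq]
    linear_combination (B4Sign (Equiv.swap p q i) * B4Sign (Equiv.swap p q j) *
      X (Equiv.swap p q i) (Equiv.swap p q j)) *
      (B4Sign j * B4Sign j * B4Sign_mul_self i + B4Sign_mul_self j)
  rw [f0, Matrix.smul_apply, Matrix.sub_apply, hcube, th4_apply hp hq, smul_eq_mul]
  ring

lemma f0_apply_zero_one (X : Matrix (Fin n) (Fin n) ℝ) (hi : i.val = 0) (hp : p.val = 1)
    (hq : q.val = 2) : f0 X i p = X i q := by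
  rw [f0_apply hp hq, swap_apply_of_zero_or_three_le hp hq (.inl hi),
    Equiv.swap_apply_left, B4Sign_of_le_one (i := i) (by omega),
    B4Sign_of_le_one (i := p) (by omega), B4Sign_of_one_lt (i := q) (by omega)]
  ring

lemma f0_apply_zero_two (X : Matrix (Fin n) (Fin n) ℝ) (hi : i.val = 0) (hp : p.val = 1)
    (hq : q.val = 2) : f0 X i q = -X i p := by
  rw [f0_apply hp hq, swap_apply_of_zero_or_three_le hp hq (.inl hi),
    Equiv.swap_apply_right, B4Sign_of_le_one (i := i) (by omega),
    B4Sign_of_le_one (i := p) (by omega), B4Sign_of_one_lt (i := q) (by omega)]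
  ring

lemma f0_apply_one_of_three_le (X : Matrix (Fin n) (Fin n) ℝ) (hp : p.val = 1) (hq : q.val = 2)
    (hj : 3 ≤ j.val) : f0 X p j = -X q j := by
  rw [f0_apply hp hq, swap_apply_of_zero_or_three_le hp hq (.inr hj),
    Equiv.swap_apply_left, B4Sign_of_le_one (i := p) (by omega),
    B4Sign_of_one_lt (i := q) (by omega), B4Sign_of_one_lt (i := j) (by omega)]
  ring

lemma f0_apply_two_of_three_le (X : Matrix (Fin n) (Fin n) ℝ) (hp : p.val = 1) (hq : q.val = 2)
    (hj : 3 ≤ j.val) : f0 X q j = X p j := by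
  rw [f0_apply hp hq, swap_apply_of_zero_or_three_le hp hq (.inr hj),
    Equiv.swap_apply_right, B4Sign_of_le_one (i := p) (by omega),
    B4Sign_of_one_lt (i := q) (by omega), B4Sign_of_one_lt (i := j) (by omega)]
  ring

lemma f0_apply_zero_of_three_le (X : Matrix (Fin n) (Fin n) ℝ) (hi : i.val = 0)
    (hj : 3 ≤ j.val) : f0 X i j = 0 := by
  have hp : (⟨1, by omega⟩ : Fin n).val = 1 := rfl
  have hq : (⟨2, by omega⟩ : Fin n).val = 2 := rfl
  rw [f0_apply hp hq, swap_apply_of_zero_or_three_le hp hq (.inl hi),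
    swap_apply_of_zero_or_three_le hp hq (.inr hj), sub_self, zero_div, zero_mul]

end FlagMfld

theorem statement8_general (n : ℕ) (hn : 3 ≤ n) (S : Matrix (Fin n) (Fin n) ℝ) :
    (inM S → inM (th4 S)) ∧
      (∀ i j k : Fin n, i.val = 0 → j.val = 1 → k.val = 2 →
        f0 S i j = S i k ∧ f0 S i k = -S i j) ∧
      (∀ i i' j : Fin n, i.val = 1 → i'.val = 2 → 3 ≤ j.val →
        f0 S i j = -S i' j ∧ f0 S i' j = S i j) ∧
      (∀ i j : Fin n, i.val = 0 → 3 ≤ j.val → f0 S i j = 0) ∧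
      f0 (f0 (f0 S)) + f0 S = 0 :=
  ⟨inM.th4,
    fun _ _ _ hi hj hk ↦ ⟨f0_apply_zero_one S hi hj hk, f0_apply_zero_two S hi hj hk⟩,
    fun _ _ _ hi hi' hj ↦
      ⟨f0_apply_one_of_three_le S hi hi' hj, f0_apply_two_of_three_le S hi hi' hj⟩,
    fun _ _ hi hj ↦ f0_apply_zero_of_three_le S hi hj,
    f0_f0_f0_add_f0 hn S⟩

/-- `θ(X) = B₄XB₄ᵀ` maps `𝔪` into itself, and the canonical f-structure
`f₀ = (1/2)(θ - θ³)` acts on `S ∈ 𝔪` by `(f₀S)₁₂ = S₁₃`, `(f₀S)₁₃ = -S₁₂`,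
`(f₀S)_{2j} = -S_{3j}`, `(f₀S)_{3j} = S_{2j}` and `(f₀S)_{1j} = 0` for `j ≥ 4` (1-based
indices; 0-based in the formalization). In particular `f₀³ + f₀ = 0` on `𝔪`. -/
theorem statement8 (n : ℕ) (hn : 4 ≤ n) :
    ∀ S : Matrix (Fin n) (Fin n) ℝ, inM S →
      inM (th4 S) ∧
      (∀ i j k : Fin n, i.val = 0 → j.val = 1 → k.val = 2 →
        f0 S i j = S i k ∧ f0 S i k = -S i j) ∧
      (∀ i i' j : Fin n, i.val = 1 → i'.val = 2 → 3 ≤ j.val →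
        f0 S i j = -S i' j ∧ f0 S i' j = S i j) ∧
      (∀ i j : Fin n, i.val = 0 → 3 ≤ j.val → f0 S i j = 0) ∧
      f0 (f0 (f0 S)) + f0 S = 0 := by
  intro S hS
  obtain ⟨hθ, hf⟩ := statement8_general n (by omega) S
  exact ⟨hθ hS, hf⟩
end

section
/- The map θ(X) = B₆ X B₆ᵀ maps 𝔪 into itself, and the four canonical f-structures of the 6-symmetric space SO(n)/SO(2)×SO(n−3) act on S ∈ 𝔪 as follows (all remaining entries determined by skew-symmetry, j ranging over j ≥ 4): f₁ = (1/√3)(θ − θ⁵) satisfies (f₁S)₁₂ = S₁₃, (f₁S)₁₃ = −S₁₂, (f₁S)_{2j} = −S_{3j}, (f₁S)_{3j} = S_{2j}, (f₁S)_{1j} = 0; f₂ = (1/(2√3))(θ − θ² + θ⁴ − θ⁵) satisfies (f₂S)_{2j} = −S_{3j}, (f₂S)_{3j} = S_{2j}, and all entries of f₂S in row 1 are zero; f₃ = (1/(2√3))(θ + θ² − θ⁴ − θ⁵) satisfies (f₃S)₁₂ = S₁₃, (f₃S)₁₃ = −S₁₂, and all other entries of f₃S are zero; f₄ = (1/√3)(θ²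 − θ⁴) satisfies (f₄S)₁₂ = S₁₃, (f₄S)₁₃ = −S₁₂, (f₄S)_{2j} = S_{3j}, (f₄S)_{3j} = −S_{2j}, (f₄S)_{1j} = 0. -/
open Matrix

open FlagMfld

/-!
The functional `X ↦ uᵀXv` attached to left eigenvectors `u`, `v` of `B₆` with eigenvalues `μ`, `ν`
is multiplied by `μν` under `θ`, hence by `p(μν)` under a polynomial `p(θ)`. With
`ζ = exp(-iπ/3)`, the vectors `e₁`, `e₂ + ie₃`, `e₂ - ie₃` and `eⱼ` (`j ≥ 4`) are left eigenvectors
with eigenvalues `1`, `ζ`, `ζ⁻¹` and `-1`. So the coordinates `S₁₂ + iS₁₃`, `S₂ⱼ + iS₃ⱼ`, `S₁ⱼ` on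
`𝔪₁`, `𝔪₂`, `𝔪₃` belong to the eigenvalues `ζ`, `-ζ`, `-1`, while the `𝔥`-entries of a skew matrix
are fixed by `θ`. Each f-structure is a polynomial in `θ` taking only the values `0` and `±i` at
`ζ`, `-ζ`, `-1`, and these values are the coefficients in the formulas.
-/

namespace FlagMfld

open Polynomial Complex

section EigenPairing

variable {m R A : Type*} [Fintype m] [CommSemiring R] [CommSemiring A] [Algebra R A]

/-- `u` is a left eigenvector of the `R`-matrix `M` over the extension `A` of `R`: `uM = μu`.
The zero vector is allowed. -/
def IsLeftEigenvector (M : Matrix m m R) (μ : A) (u : m → A) : Prop :=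
  u ᵥ* M.map (algebraMap R A) = μ • u

/-- The value `uᵀXv` at a matrix `X` of the bilinear form it defines over `A`, as a linear
functional of `X`. -/
def pairing (u v : m → A) : Matrix m m R →ₗ[R] A where
  toFun X := u ᵥ* X.map (algebraMap R A) ⬝ᵥ v
  map_add' X Y := by
    rw [Matrix.map_add _ (map_add _), vecMul_add, add_dotProduct]
  map_smul' c X := by
    have hmap : (c • X).map (algebraMap R A) = c • X.map (algebraMap R A) := by
      ext i j
      simp [Algebra.smul_def]
    rw [hmap, vecMul_smul, smul_dotProduct, RingHom.id_apply]

theorem pairing_mul_mul_transpose {M : Matrix m m R} {μ ν : A} {u v : m → A}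
    (hu : IsLeftEigenvector M μ u) (hv : IsLeftEigenvector M ν v) (X : Matrix m m R) :
    pairing u v (M * X * Mᵀ) = μ * ν * pairing u v X := by
  have hv' : (M.map (algebraMap R A))ᵀ *ᵥ v = ν • v := by
    rw [mulVec_transpose, hv]
  calc u ᵥ* (M * X * Mᵀ).map (algebraMap R A) ⬝ᵥ v
      = u ᵥ* M.map (algebraMap R A) ᵥ* X.map (algebraMap R A) ⬝ᵥ
          (M.map (algebraMap R A))ᵀ *ᵥ v := by
        rw [Matrix.map_mul, Matrix.map_mul, transpose_map, dotProduct_mulVec, vecMul_vecMul,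
          vecMul_vecMul, mul_assoc]
    _ = μ * ν * (u ᵥ* X.map (algebraMap R A) ⬝ᵥ v) := by
        rw [hu, hv', smul_vecMul, smul_dotProduct, dotProduct_smul, smul_eq_mul, smul_eq_mul,
          mul_assoc]

theorem pairing_single_single [DecidableEq m] (i j : m) (X : Matrix m m R) :
    pairing (Pi.single i 1 : m → A) (Pi.single j 1) X = algebraMap R A (X i j) := by
  simp [pairing]

theorem pairing_add_smul_left (u u' v : m → A) (z : A) (X : Matrix m m R) :
    pairing (u + z • u') v X = pairing u v X + z * pairing u' v X := by
  simp [pairing, add_vecMul, smul_vecMul, add_dotProduct]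

theorem pairing_add_smul_right (u v v' : m → A) (z : A) (X : Matrix m m R) :
    pairing u (v + z • v') X = pairing u v X + z * pairing u v' X := by
  simp [pairing, dotProduct_add]

theorem map_aeval_of_map_eq_mul {V : Type*} [AddCommMonoid V] [Module R V] {T : Module.End R V}
    {φ : V →ₗ[R] A} {μ : A} (h : ∀ x, φ (T x) = μ * φ x) (p : R[X]) (x : V) :
    φ (aeval T p x) = aeval μ p * φ x := by
  induction p using Polynomial.induction_on' with
  | add p q hp hq => simp only [map_add, LinearMap.add_apply, hp, hq, add_mul]
  | monomial k c =>
    have hpow : φ ((T ^ k) x) = μ ^ k * φ x := by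
      induction k with
      | zero => simp
      | succ k ih => rw [pow_succ', Module.End.mul_apply, h, ih, pow_succ', mul_assoc]
    simp [aeval_monomial, Module.algebraMap_end_apply, hpow, Algebra.smul_def, mul_assoc]

end EigenPairing

section Theta

variable {n : ℕ}

/-- The map `θ` as an endomorphism of the space of all real `n × n` matrices. -/
noncomputable def theta (n : ℕ) : Module.End ℝ (Matrix (Fin n) (Fin n) ℝ) where
  toFun := th6
  map_add' X Y := by simp only [th6, mul_add, add_mul]
  map_smul' c X := by simp [th6]

theorem theta_apply (S : Matrix (Fin n) (Fin n) ℝ) : theta n S = th6 S := rfl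

/-- The complement `𝔪` as a linear subspace. -/
def complementM (n : ℕ) : Submodule ℝ (Matrix (Fin n) (Fin n) ℝ) where
  carrier := {X | inM X}
  zero_mem' := by simp [inM]
  add_mem' := by
    rintro X Y ⟨hX, hX₁, hX₂⟩ ⟨hY, hY₁, hY₂⟩
    refine ⟨by rw [transpose_add, hX, hY, neg_add], fun i j hi hj => ?_, fun i j hi hj => ?_⟩
    · simp [hX₁ i j hi hj, hY₁ i j hi hj]
    · simp [hX₂ i j hi hj, hY₂ i j hi hj]
  smul_mem' := by
    rintro c X ⟨hX, hX₁, hX₂⟩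
    refine ⟨by rw [transpose_smul, hX, smul_neg], fun i j hi hj => ?_, fun i j hi hj => ?_⟩
    · simp [hX₁ i j hi hj]
    · simp [hX₂ i j hi hj]

/-- The sixth root of unity `ζ = exp(-iπ/3)`. -/
noncomputable def zeta : ℂ := 1 / 2 - √3 / 2 * I

theorem sqrt_three_sq : (√3 : ℂ) ^ 2 = 3 := by
  norm_cast
  simp

theorem zeta_sq : zeta ^ 2 = zeta - 1 := by
  rw [zeta]
  linear_combination (1 / 4 * I ^ 2) * sqrt_three_sq + 3 / 4 * I_sq

variable {a b c i j : Fin n}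

theorem B6_apply_zero (ha : a.val = 0) (k : Fin n) : B6 a k = if k = a then 1 else 0 := by
  simp only [B6, of_apply, Fin.ext_iff]
  grind

theorem B6_apply_one (hb : b.val = 1) (hc : c.val = 2) (k : Fin n) :
    B6 b k = if k = b then 1 / 2 else if k = c then √3 / 2 else 0 := by
  simp only [B6, of_apply, Fin.ext_iff]
  grind

theorem B6_apply_two (hb : b.val = 1) (hc : c.val = 2) (k : Fin n) :
    B6 c k = if k = b then -(√3 / 2) else if k = c then 1 / 2 else 0 := by
  simp only [B6, of_apply, Fin.ext_iff]
  grind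

theorem B6_apply_of_three_le (hj : 3 ≤ j.val) (k : Fin n) :
    B6 j k = if k = j then -1 else 0 := by
  simp only [B6, of_apply, Fin.ext_iff]
  grind

theorem isLeftEigenvector_B6_zero (ha : a.val = 0) :
    IsLeftEigenvector B6 (1 : ℂ) (Pi.single a 1) := by
  ext k
  rw [single_one_vecMul, row_apply, map_apply, B6_apply_zero ha, one_smul, Pi.single_apply,
    apply_ite (algebraMap ℝ ℂ), map_one, map_zero]

theorem isLeftEigenvector_B6_of_three_le (hj : 3 ≤ j.val) :
    IsLeftEigenvector B6 (-1 : ℂ) (Pi.single j 1) := by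
  ext k
  rw [single_one_vecMul, row_apply, map_apply, B6_apply_of_three_le hj, Pi.smul_apply,
    Pi.single_apply]
  split_ifs <;> simp

theorem isLeftEigenvector_B6_rotation (hb : b.val = 1) (hc : c.val = 2) {z : ℂ}
    (hz : z ^ 2 = -1) :
    IsLeftEigenvector B6 (1 / 2 - √3 / 2 * z) (Pi.single b 1 + z • Pi.single c 1) := by
  have hbc : b ≠ c := by grind
  ext k
  simp only [add_vecMul, smul_vecMul, single_one_vecMul, Pi.add_apply, Pi.smul_apply, row_apply,
    map_apply, B6_apply_one hb hc, B6_apply_two hb hc, Pi.single_apply, smul_eq_mul]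
  split_ifs with hkb hkc hkc
  · exact absurd (hkb.symm.trans hkc) hbc
  · push_cast [coe_algebraMap]
    ring
  · push_cast [coe_algebraMap]
    linear_combination (√3 / 2 : ℂ) * hz
  · simp

theorem apply_swap_of_transpose_eq_neg {X : Matrix (Fin n) (Fin n) ℝ} (hX : Xᵀ = -X)
    (i j : Fin n) : X j i = -X i j :=
  congrFun₂ hX i j

theorem transpose_th6 {S : Matrix (Fin n) (Fin n) ℝ} (hS : Sᵀ = -S) : (th6 S)ᵀ = -th6 S := by
  simp [th6, hS, mul_assoc]

theorem th6_apply_one_two {S : Matrix (Fin n) (Fin n) ℝ} (hS : Sᵀ = -S) (hb : b.val = 1)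
    (hc : c.val = 2) : th6 S b c = S b c := by
  have hpairing (X : Matrix (Fin n) (Fin n) ℝ) (hX : Xᵀ = -X) :
      pairing (Pi.single b 1 + I • Pi.single c 1) (Pi.single b 1 + (-I) • Pi.single c 1) X =
        -2 * I * X b c := by
    have hbb : X b b = 0 := by linarith [apply_swap_of_transpose_eq_neg hX b b]
    have hcc : X c c = 0 := by linarith [apply_swap_of_transpose_eq_neg hX c c]
    simp only [pairing_add_smul_left, pairing_add_smul_right, pairing_single_single, hbb, hcc,
      apply_swap_of_transpose_eq_neg hX b c, coe_algebraMap]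
    push_cast
    ring
  have hfixed := pairing_mul_mul_transpose (isLeftEigenvector_B6_rotation hb hc I_sq)
    (isLeftEigenvector_B6_rotation hb hc (z := -I) (by simp)) S
  have heigenvalue : (1 / 2 - √3 / 2 * I) * (1 / 2 - √3 / 2 * -I) = 1 := by
    linear_combination (-I ^ 2 / 4) * sqrt_three_sq - 3 / 4 * I_sq
  rw [heigenvalue, one_mul, hpairing S hS, ← th6, hpairing _ (transpose_th6 hS)] at hfixed
  simpa using hfixed

theorem th6_apply_of_three_le (S : Matrix (Fin n) (Fin n) ℝ) (hi : 3 ≤ i.val) (hj : 3 ≤ j.val) :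
    th6 S i j = S i j := by
  have hfixed := pairing_mul_mul_transpose (isLeftEigenvector_B6_of_three_le hi)
    (isLeftEigenvector_B6_of_three_le hj) S
  rw [← th6, neg_mul_neg, one_mul, one_mul, pairing_single_single, pairing_single_single] at hfixed
  exact ofReal_injective hfixed

theorem inM_th6 {S : Matrix (Fin n) (Fin n) ℝ} (hS : inM S) : inM (th6 S) := by
  obtain ⟨hskew, hrot, hblock⟩ := hS
  refine ⟨transpose_th6 hskew, fun b c hb hc => ?_, fun i j hi hj => ?_⟩
  · rw [th6_apply_one_two hskew hb hc, hrot b c hb hc]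
  · rw [th6_apply_of_three_le S hi hj, hblock i j hi hj]

theorem inM_aeval_theta {S : Matrix (Fin n) (Fin n) ℝ} (hS : inM S) (p : ℝ[X]) :
    inM (aeval (theta n) p S) :=
  aeval_apply_smul_mem_of_le_comap (q := complementM n) hS p (theta n) fun _ => inM_th6

theorem pairing_aeval_theta {μ ν : ℂ} {u v : Fin n → ℂ} (hu : IsLeftEigenvector B6 μ u)
    (hv : IsLeftEigenvector B6 ν v) (p : ℝ[X]) (S : Matrix (Fin n) (Fin n) ℝ) :
    pairing u v (aeval (theta n) p S) = aeval (μ * ν) p * pairing u v S :=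
  map_aeval_of_map_eq_mul (pairing_mul_mul_transpose hu hv) p S

theorem aeval_theta_apply_M1 (ha : a.val = 0) (hb : b.val = 1) (hc : c.val = 2) (p : ℝ[X])
    (S : Matrix (Fin n) (Fin n) ℝ) :
    aeval (theta n) p S a b = (aeval zeta p).re * S a b - (aeval zeta p).im * S a c ∧
      aeval (theta n) p S a c = (aeval zeta p).re * S a c + (aeval zeta p).im * S a b := by
  have h := pairing_aeval_theta (isLeftEigenvector_B6_zero ha)
    (isLeftEigenvector_B6_rotation hb hc I_sq) p S
  rw [one_mul, ← zeta] at h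
  simpa [pairing_add_smul_right, pairing_single_single, Complex.ext_iff] using h

theorem aeval_theta_apply_M2 (hb : b.val = 1) (hc : c.val = 2) (hj : 3 ≤ j.val) (p : ℝ[X])
    (S : Matrix (Fin n) (Fin n) ℝ) :
    aeval (theta n) p S b j = (aeval (-zeta) p).re * S b j - (aeval (-zeta) p).im * S c j ∧
      aeval (theta n) p S c j = (aeval (-zeta) p).re * S c j + (aeval (-zeta) p).im * S b j := by
  have h := pairing_aeval_theta (isLeftEigenvector_B6_rotation hb hc I_sq)
    (isLeftEigenvector_B6_of_three_le hj) p S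
  rw [mul_neg_one, ← zeta] at h
  simpa [pairing_add_smul_left, pairing_single_single, Complex.ext_iff] using h

theorem aeval_theta_apply_M3 (ha : a.val = 0) (hj : 3 ≤ j.val) (p : ℝ[X])
    (S : Matrix (Fin n) (Fin n) ℝ) :
    aeval (theta n) p S a j = p.eval (-1) * S a j := by
  have h := pairing_aeval_theta (isLeftEigenvector_B6_zero ha)
    (isLeftEigenvector_B6_of_three_le hj) p S
  have hreal : aeval (-1 : ℂ) p = (p.eval (-1) : ℝ) := by
    simpa using aeval_algebraMap_apply_eq_algebraMap_eval (A := ℂ) (-1 : ℝ) p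
  rw [one_mul, hreal, pairing_single_single, pairing_single_single] at h
  exact ofReal_injective (h.trans (ofReal_mul _ _).symm)

theorem inM1_of_inM {X : Matrix (Fin n) (Fin n) ℝ} (hX : inM X)
    (h₂ : ∀ i j : Fin n, i.val = 1 ∨ i.val = 2 → 3 ≤ j.val → X i j = 0)
    (h₃ : ∀ i j : Fin n, i.val = 0 → 3 ≤ j.val → X i j = 0) : inM1 X := by
  obtain ⟨hskew, hrot, hblock⟩ := hX
  refine ⟨hskew, fun i j hij => ?_⟩
  have hswap := apply_swap_of_transpose_eq_neg hskew
  grind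

theorem inM2_of_inM {X : Matrix (Fin n) (Fin n) ℝ} (hX : inM X)
    (h₁ : ∀ i j : Fin n, i.val = 0 → j.val = 1 ∨ j.val = 2 → X i j = 0)
    (h₃ : ∀ i j : Fin n, i.val = 0 → 3 ≤ j.val → X i j = 0) : inM2 X := by
  obtain ⟨hskew, hrot, hblock⟩ := hX
  refine ⟨hskew, fun i j hij => ?_⟩
  have hswap := apply_swap_of_transpose_eq_neg hskew
  grind

/-- The polynomial whose value at `θ` is the f-structure `f₁`. -/
noncomputable def f1Poly : ℝ[X] := (1 / √3) • (X - X ^ 5)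

/-- The polynomial whose value at `θ` is the f-structure `f₂`. -/
noncomputable def f2Poly : ℝ[X] := (1 / (2 * √3)) • (X - X ^ 2 + X ^ 4 - X ^ 5)

/-- The polynomial whose value at `θ` is the f-structure `f₃`. -/
noncomputable def f3Poly : ℝ[X] := (1 / (2 * √3)) • (X + X ^ 2 - X ^ 4 - X ^ 5)

/-- The polynomial whose value at `θ` is the f-structure `f₄`. -/
noncomputable def f4Poly : ℝ[X] := (1 / √3) • (X ^ 2 - X ^ 4)

theorem f1_eq_aeval (S : Matrix (Fin n) (Fin n) ℝ) : f1 S = aeval (theta n) f1Poly S := by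
  simp [f1, f1Poly, theta_apply, pow_succ]

theorem f2_eq_aeval (S : Matrix (Fin n) (Fin n) ℝ) : f2 S = aeval (theta n) f2Poly S := by
  simp [f2, f2Poly, theta_apply, pow_succ]

theorem f3_eq_aeval (S : Matrix (Fin n) (Fin n) ℝ) : f3 S = aeval (theta n) f3Poly S := by
  simp [f3, f3Poly, theta_apply, pow_succ]

theorem f4_eq_aeval (S : Matrix (Fin n) (Fin n) ℝ) : f4 S = aeval (theta n) f4Poly S := by
  simp [f4, f4Poly, theta_apply, pow_succ]

theorem zeta_pow_four : zeta ^ 4 = -zeta := by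
  linear_combination (zeta ^ 2 + zeta) * zeta_sq

theorem zeta_pow_five : zeta ^ 5 = 1 - zeta := by
  linear_combination zeta * zeta_pow_four - zeta_sq

theorem two_mul_zeta : 2 * zeta = 1 - √3 * I := by
  rw [zeta]
  ring

theorem aeval_f1Poly (μ : ℂ) : aeval μ f1Poly = (μ - μ ^ 5) / √3 := by
  simp [f1Poly, div_eq_inv_mul]

theorem aeval_zeta_f1Poly : aeval zeta f1Poly = -I := by
  rw [aeval_f1Poly, div_eq_iff (by simp)]
  linear_combination two_mul_zeta - zeta_pow_five

theorem aeval_neg_zeta_f1Poly : aeval (-zeta) f1Poly = I := by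
  rw [aeval_f1Poly, div_eq_iff (by simp)]
  linear_combination zeta_pow_five - two_mul_zeta

theorem eval_neg_one_f1Poly : f1Poly.eval (-1) = 0 := by
  norm_num [f1Poly]

theorem aeval_f2Poly (μ : ℂ) : aeval μ f2Poly = (μ - μ ^ 2 + μ ^ 4 - μ ^ 5) / (2 * √3) := by
  simp [f2Poly, div_eq_inv_mul]

theorem aeval_zeta_f2Poly : aeval zeta f2Poly = 0 := by
  rw [aeval_f2Poly, div_eq_iff (by simp)]
  linear_combination zeta_pow_four - zeta_sq - zeta_pow_five

theorem aeval_neg_zeta_f2Poly : aeval (-zeta) f2Poly = I := by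
  rw [aeval_f2Poly, div_eq_iff (by simp)]
  linear_combination zeta_pow_four - zeta_sq + zeta_pow_five - 2 * two_mul_zeta

theorem eval_neg_one_f2Poly : f2Poly.eval (-1) = 0 := by
  norm_num [f2Poly]

theorem aeval_f3Poly (μ : ℂ) : aeval μ f3Poly = (μ + μ ^ 2 - μ ^ 4 - μ ^ 5) / (2 * √3) := by
  simp [f3Poly, div_eq_inv_mul]

theorem aeval_zeta_f3Poly : aeval zeta f3Poly = -I := by
  rw [aeval_f3Poly, div_eq_iff (by simp)]
  linear_combination zeta_sq - zeta_pow_four - zeta_pow_five + 2 * two_mul_zeta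

theorem aeval_neg_zeta_f3Poly : aeval (-zeta) f3Poly = 0 := by
  rw [aeval_f3Poly, div_eq_iff (by simp)]
  linear_combination zeta_sq - zeta_pow_four + zeta_pow_five

theorem eval_neg_one_f3Poly : f3Poly.eval (-1) = 0 := by
  norm_num [f3Poly]

theorem aeval_f4Poly (μ : ℂ) : aeval μ f4Poly = (μ ^ 2 - μ ^ 4) / √3 := by
  simp [f4Poly, div_eq_inv_mul]

theorem aeval_zeta_f4Poly : aeval zeta f4Poly = -I := by
  rw [aeval_f4Poly, div_eq_iff (by simp)]
  linear_combination zeta_sq - zeta_pow_four + two_mul_zeta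

theorem aeval_neg_zeta_f4Poly : aeval (-zeta) f4Poly = -I := by
  rw [aeval_f4Poly, div_eq_iff (by simp)]
  linear_combination zeta_sq - zeta_pow_four + two_mul_zeta

theorem eval_neg_one_f4Poly : f4Poly.eval (-1) = 0 := by
  norm_num [f4Poly]

theorem inM2_f2 (hn : 3 ≤ n) {S : Matrix (Fin n) (Fin n) ℝ} (hS : inM S) : inM2 (f2 S) := by
  rw [f2_eq_aeval]
  refine inM2_of_inM (inM_aeval_theta hS _) (fun a j ha hj => ?_) fun a j ha hj => ?_
  · have hM1 := aeval_theta_apply_M1 ha (b := ⟨1, by omega⟩) (c := ⟨2, hn⟩) rfl rfl f2Poly S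
    simp only [aeval_zeta_f2Poly, zero_re, zero_im, zero_mul, sub_zero, add_zero] at hM1
    rcases hj with hj | hj
    · exact (Fin.ext hj : j = ⟨1, _⟩) ▸ hM1.1
    · exact (Fin.ext hj : j = ⟨2, _⟩) ▸ hM1.2
  · rw [aeval_theta_apply_M3 ha hj, eval_neg_one_f2Poly, zero_mul]

theorem inM1_f3 {S : Matrix (Fin n) (Fin n) ℝ} (hS : inM S) : inM1 (f3 S) := by
  rw [f3_eq_aeval]
  refine inM1_of_inM (inM_aeval_theta hS _) (fun i j hi hj => ?_) fun a j ha hj => ?_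
  · have hM2 := aeval_theta_apply_M2 (b := ⟨1, by omega⟩) (c := ⟨2, by omega⟩) rfl rfl hj f3Poly S
    simp only [aeval_neg_zeta_f3Poly, zero_re, zero_im, zero_mul, sub_zero, add_zero] at hM2
    rcases hi with hi | hi
    · exact (Fin.ext hi : i = ⟨1, _⟩) ▸ hM2.1
    · exact (Fin.ext hi : i = ⟨2, _⟩) ▸ hM2.2
  · rw [aeval_theta_apply_M3 ha hj, eval_neg_one_f3Poly, zero_mul]

end Theta

end FlagMfld

/-- `θ(X) = B₆XB₆ᵀ` maps `𝔪` into itself, and the four canonical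
f-structures of the 6-symmetric space act on `S ∈ 𝔪` as described (1-based indices in the
paper; 0-based in the formalization, `j` ranging over `j ≥ 4`, i.e. `j.val ≥ 3`). -/
theorem statement9 (n : ℕ) (hn : 4 ≤ n) :
    ∀ S : Matrix (Fin n) (Fin n) ℝ, inM S →
      inM (th6 S) ∧
      -- f₁ : (f₁S)₁₂ = S₁₃, (f₁S)₁₃ = -S₁₂, (f₁S)_{2j} = -S_{3j}, (f₁S)_{3j} = S_{2j},
      -- (f₁S)_{1j} = 0
      ((∀ i j k : Fin n, i.val = 0 → j.val = 1 → k.val = 2 →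
        f1 S i j = S i k ∧ f1 S i k = -S i j) ∧
       (∀ i i' j : Fin n, i.val = 1 → i'.val = 2 → 3 ≤ j.val →
        f1 S i j = -S i' j ∧ f1 S i' j = S i j) ∧
       (∀ i j : Fin n, i.val = 0 → 3 ≤ j.val → f1 S i j = 0)) ∧
      -- f₂ : (f₂S)_{2j} = -S_{3j}, (f₂S)_{3j} = S_{2j}, and row 1 of f₂S vanishes
      ((∀ i i' j : Fin n, i.val = 1 → i'.val = 2 → 3 ≤ j.val →
        f2 S i j = -S i' j ∧ f2 S i' j = S i j) ∧
       (∀ i j : Fin n, i.val = 0 → f2 S i j = 0)) ∧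
      -- f₃ : (f₃S)₁₂ = S₁₃, (f₃S)₁₃ = -S₁₂, and all other entries of f₃S vanish
      ((∀ i j k : Fin n, i.val = 0 → j.val = 1 → k.val = 2 →
        f3 S i j = S i k ∧ f3 S i k = -S i j) ∧
       (∀ i j : Fin n,
        ¬((i.val = 0 ∧ (j.val = 1 ∨ j.val = 2)) ∨ (j.val = 0 ∧ (i.val = 1 ∨ i.val = 2))) →
        f3 S i j = 0)) ∧
      -- f₄ : (f₄S)₁₂ = S₁₃, (f₄S)₁₃ = -S₁₂, (f₄S)_{2j} = S_{3j}, (f₄S)_{3j} = -S_{2j},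
      -- (f₄S)_{1j} = 0
      ((∀ i j k : Fin n, i.val = 0 → j.val = 1 → k.val = 2 →
        f4 S i j = S i k ∧ f4 S i k = -S i j) ∧
       (∀ i i' j : Fin n, i.val = 1 → i'.val = 2 → 3 ≤ j.val →
        f4 S i j = S i' j ∧ f4 S i' j = -S i j) ∧
       (∀ i j : Fin n, i.val = 0 → 3 ≤ j.val → f4 S i j = 0)) := by
  intro S hS
  simp only [f1_eq_aeval, f4_eq_aeval]
  refine ⟨inM_th6 hS, ⟨fun a b c ha hb hc => ?_, fun b c j hb hc hj => ?_, fun a j ha hj => ?_⟩,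
    ⟨fun b c j hb hc hj => ?_, fun a j ha => ?_⟩,
    ⟨fun a b c ha hb hc => ?_, fun i j => not_imp_comm.mp ((inM1_f3 hS).2 i j)⟩,
    ⟨fun a b c ha hb hc => ?_, fun b c j hb hc hj => ?_, fun a j ha hj => ?_⟩⟩
  · simpa [aeval_zeta_f1Poly] using aeval_theta_apply_M1 ha hb hc f1Poly S
  · simpa [aeval_neg_zeta_f1Poly] using aeval_theta_apply_M2 hb hc hj f1Poly S
  · rw [aeval_theta_apply_M3 ha hj, eval_neg_one_f1Poly, zero_mul]
  · simpa [f2_eq_aeval, aeval_neg_zeta_f2Poly] using aeval_theta_apply_M2 hb hc hj f2Poly S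
  · exact not_imp_comm.mp ((inM2_f2 (by omega) hS).2 a j) (by omega)
  · simpa [f3_eq_aeval, aeval_zeta_f3Poly] using aeval_theta_apply_M1 ha hb hc f3Poly S
  · simpa [aeval_zeta_f4Poly] using aeval_theta_apply_M1 ha hb hc f4Poly S
  · simpa [aeval_neg_zeta_f4Poly] using aeval_theta_apply_M2 hb hc hj f4Poly S
  · rw [aeval_theta_apply_M3 ha hj, eval_neg_one_f4Poly, zero_mul]
end

section
/- The maps θ(X) = B₄ X B₄ᵀ and θ'(X) = B₆ X B₆ᵀ both map 𝔪 into itself; θ satisfies θ⁴ = id on 𝔪 and has no nonzero fixed vector in 𝔪, and θ' satisfies θ'⁶ = id on 𝔪 and has no nonzero fixed vector in 𝔪 (this expresses the regularity of SO(n)/SO(2)×SO(n−3) as a homogeneous Φ-space of order 4, respectively 6). -/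
open Matrix

open FlagMfld

/-!
The space `𝔪` consists of the skew-symmetric matrices whose diagonal blocks vanish for the
partition of the indices into `{1}`, `{2, 3}` and `{4, …, n}`, so conjugation by any block-diagonal
matrix preserves it. Both `B₄` and `B₆` have the form `B = diag(1, R, -1, …, -1)` with `R` the
rotation by `π / k`, for `k = 2` and `k = 3`, hence `B ^ (2 * k) = 1`. On the off-diagonal blocks
`x`, `y`, `Z` of `X ∈ 𝔪` (block positions `(2, 1)`, `(1, 3)`, `(2, 3)`) the conjugation acts by
`R x`, `-y`, `-R Z`. As `R` has neither `1` nor `-1` as an eigenvalue, only `X = 0` is fixed.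
-/

namespace FlagMfld

open Real

theorem conj_transpose_apply_eq_zero_of_blockDiagonal {ι β R : Type*} [Fintype ι]
    [NonUnitalNonAssocSemiring R] (b : ι → β) {B X : Matrix ι ι R}
    (hB : ∀ i j, b i ≠ b j → B i j = 0) (hX : ∀ i j, b i = b j → X i j = 0)
    {i j : ι} (hij : b i = b j) : (B * X * Bᵀ) i j = 0 := by
  simp only [Matrix.mul_apply, transpose_apply]
  refine Finset.sum_eq_zero fun l _ => ?_
  by_cases hl : b j = b l
  · rw [Finset.sum_eq_zero fun k _ => ?_, zero_mul]
    by_cases hk : b i = b k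
    · rw [hX k l (hk.symm.trans (hij.trans hl)), mul_zero]
    · rw [hB i k hk, zero_mul]
  · rw [hB j l hl, mul_zero]

theorem transpose_conj_transpose_eq_neg {ι R : Type*} [Fintype ι] [CommRing R]
    (B : Matrix ι ι R) {X : Matrix ι ι R} (hX : Xᵀ = -X) :
    (B * X * Bᵀ)ᵀ = -(B * X * Bᵀ) := by
  rw [transpose_mul, transpose_mul, transpose_transpose, hX, Matrix.neg_mul, Matrix.mul_neg,
    Matrix.mul_assoc]

theorem iterate_conj_transpose {ι R : Type*} [Fintype ι] [DecidableEq ι] [CommSemiring R]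
    (B X : Matrix ι ι R) (k : ℕ) :
    (fun Y => B * Y * Bᵀ)^[k] X = B ^ k * X * (B ^ k)ᵀ := by
  induction k with
  | zero => simp
  | succ k ih =>
    rw [Function.iterate_succ_apply', ih, pow_succ', transpose_mul]
    simp only [Matrix.mul_assoc]

theorem mul_transpose_apply {ι κ μ R : Type*} [Fintype κ] [CommSemiring R]
    (Y : Matrix ι κ R) (B : Matrix μ κ R) (i : ι) (j : μ) :
    (Y * Bᵀ) i j = (B * Yᵀ) j i := by
  rw [← transpose_apply (B * Yᵀ), transpose_mul, transpose_transpose]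

theorem apply_swap_eq_neg {ι R : Type*} [Neg R] {X : Matrix ι ι R} (hX : Xᵀ = -X) (i j : ι) :
    X j i = -X i j :=
  congrFun (congrFun hX i) j

theorem eq_zero_of_rotation_fixed {φ a b : ℝ} (hφ : cos φ ≠ 1)
    (ha : cos φ * a + sin φ * b = a) (hb : -sin φ * a + cos φ * b = b) : a = 0 ∧ b = 0 := by
  have h : (1 - cos φ) * (a * a + b * b) = 0 := by linear_combination -a * ha - b * hb
  exact mul_self_add_mul_self_eq_zero.mp
    ((mul_eq_zero.mp h).resolve_left (sub_ne_zero.mpr hφ.symm))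

section Block

variable {n : ℕ}

/-- The block of the partition `{0}, {1, 2}, {3, …, n - 1}` containing the (0-based) index `i`. -/
def blockIndex (i : Fin n) : Fin 3 :=
  if i.val = 0 then 0 else if i.val ≤ 2 then 1 else 2

theorem inM_iff_blockIndex {X : Matrix (Fin n) (Fin n) ℝ} :
    inM X ↔ Xᵀ = -X ∧ ∀ i j, blockIndex i = blockIndex j → X i j = 0 := by
  refine and_congr_right fun hX => ⟨fun ⟨h12, h3⟩ i j hij => ?_, fun h => ⟨?_, ?_⟩⟩
  · have hcases : i = j ∨ (i.val = 1 ∧ j.val = 2) ∨ (j.val = 1 ∧ i.val = 2) ∨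
        (3 ≤ i.val ∧ 3 ≤ j.val) := by
      unfold blockIndex at hij
      grind
    rcases hcases with rfl | ⟨hi, hj⟩ | ⟨hj, hi⟩ | ⟨hi, hj⟩
    · exact self_eq_neg.mp (apply_swap_eq_neg hX i i)
    · exact h12 i j hi hj
    · rw [apply_swap_eq_neg hX j i, h12 j i hj hi, neg_zero]
    · exact h3 i j hi hj
  · exact fun i j hi hj => h i j (by simp [blockIndex, hi, hj])
  · exact fun i j hi hj => h i j (by unfold blockIndex; grind)

/-- The block-diagonal matrix `diag(1, R(φ), ε, …, ε)`, with the rotation block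
`R(φ) = [[cos φ, sin φ], [-sin φ, cos φ]]` and a free scalar `ε`, so that the family is closed
under products; `B₄` and `B₆` are its members with `ε = -1` and `φ = π / 2`, `π / 3`. -/
noncomputable def blockRot (n : ℕ) (φ ε : ℝ) : Matrix (Fin n) (Fin n) ℝ :=
  Matrix.of fun i j =>
    if i.val = 0 ∧ j.val = 0 then 1
    else if i.val = 1 ∧ j.val = 1 then cos φ
    else if i.val = 1 ∧ j.val = 2 then sin φ
    else if i.val = 2 ∧ j.val = 1 then -sin φ
    else if i.val = 2 ∧ j.val = 2 then cos φ
    else if 3 ≤ i.val ∧ i = j then ε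
    else 0

/-- The conjugation `X ↦ B X Bᵀ` by `B = diag(1, R(φ), -1, …, -1)`, the common form of `θ`
and `θ'`. -/
noncomputable def rotConj (φ : ℝ) (X : Matrix (Fin n) (Fin n) ℝ) : Matrix (Fin n) (Fin n) ℝ :=
  blockRot n φ (-1) * X * (blockRot n φ (-1))ᵀ

theorem blockRot_apply_eq_zero (φ ε : ℝ) (i j : Fin n) (hij : blockIndex i ≠ blockIndex j) :
    blockRot n φ ε i j = 0 := by
  simp only [blockRot, blockIndex, of_apply] at *
  grind

theorem blockRot_eq_one {φ : ℝ} (hφ : cos φ = 1) : blockRot n φ 1 = 1 := by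
  have hsin : sin φ = 0 := sin_eq_zero_iff_cos_eq.mpr (.inl hφ)
  ext i j
  simp only [blockRot, of_apply, hφ, hsin, Matrix.one_apply]
  grind

theorem B4_eq_blockRot : B4 = blockRot n (π / 2) (-1) := by
  ext i j
  simp only [B4, blockRot, of_apply, cos_pi_div_two, sin_pi_div_two]
  grind

theorem B6_eq_blockRot : B6 = blockRot n (π / 3) (-1) := by
  simp only [B6, blockRot, cos_pi_div_three, sin_pi_div_three]

theorem th4_eq_rotConj : (th4 : Matrix (Fin n) (Fin n) ℝ → _) = rotConj (π / 2) := by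
  unfold th4 rotConj
  rw [B4_eq_blockRot]

theorem th6_eq_rotConj : (th6 : Matrix (Fin n) (Fin n) ℝ → _) = rotConj (π / 3) := by
  unfold th6 rotConj
  rw [B6_eq_blockRot]

theorem rotConj_apply (φ : ℝ) (X : Matrix (Fin n) (Fin n) ℝ) (i j : Fin n) :
    rotConj φ X i j = (blockRot n φ (-1) * (blockRot n φ (-1) * X)ᵀ) j i :=
  mul_transpose_apply _ _ i j

theorem inM_rotConj (φ : ℝ) {X : Matrix (Fin n) (Fin n) ℝ} (hX : inM X) :
    inM (rotConj φ X) := by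
  rw [inM_iff_blockIndex] at hX ⊢
  exact ⟨transpose_conj_transpose_eq_neg _ hX.1, fun i j hij =>
    conj_transpose_apply_eq_zero_of_blockDiagonal blockIndex (blockRot_apply_eq_zero φ (-1))
      hX.2 hij⟩

end Block

section EntryFormulas

variable {m : ℕ}

theorem forall_fin_add_three {P : Fin (m + 3) → Prop} :
    (∀ i, P i) ↔ P 0 ∧ P 1 ∧ P 2 ∧ ∀ k : Fin m, P k.succ.succ.succ := by
  simp only [Fin.forall_fin_succ]
  rfl

section Rows

variable (φ ε : ℝ) {κ : Type*} (Y : Matrix (Fin (m + 3)) κ ℝ) (j : κ)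

theorem blockRot_mul_apply_zero : (blockRot (m + 3) φ ε * Y) 0 j = Y 0 j := by
  simp [Matrix.mul_apply, blockRot]

theorem blockRot_mul_apply_one :
    (blockRot (m + 3) φ ε * Y) 1 j = cos φ * Y 1 j + sin φ * Y 2 j := by
  simp [Matrix.mul_apply, Fin.sum_univ_succ, blockRot]

theorem blockRot_mul_apply_two :
    (blockRot (m + 3) φ ε * Y) 2 j = -sin φ * Y 1 j + cos φ * Y 2 j := by
  have hval : 2 % (m + 3) = 2 := Nat.mod_eq_of_lt (by omega)
  have hne : (2 : Fin (m + 3)) ≠ 0 := Fin.ne_of_val_ne (by simp [hval])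
  simp [Matrix.mul_apply, Fin.sum_univ_succ, blockRot, hval, hne]

theorem blockRot_mul_apply_succ (k : Fin m) :
    (blockRot (m + 3) φ ε * Y) k.succ.succ.succ j = ε * Y k.succ.succ.succ j := by
  simp [Matrix.mul_apply, blockRot]

end Rows

theorem blockRot_mul_blockRot (φ ψ ε δ : ℝ) :
    blockRot (m + 3) φ ε * blockRot (m + 3) ψ δ = blockRot (m + 3) (φ + ψ) (ε * δ) := by
  suffices h : ∀ Y : Matrix (Fin (m + 3)) (Fin (m + 3)) ℝ,
      blockRot (m + 3) φ ε * (blockRot (m + 3) ψ δ * Y) = blockRot (m + 3) (φ + ψ) (ε * δ) * Y by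
    simpa only [Matrix.mul_one] using h 1
  intro Y
  ext i j
  revert i
  simp only [forall_fin_add_three, blockRot_mul_apply_zero, blockRot_mul_apply_one,
    blockRot_mul_apply_two, blockRot_mul_apply_succ, cos_add, sin_add]
  refine ⟨trivial, ?_, ?_, fun k => ?_⟩ <;> ring

theorem blockRot_pow (φ ε : ℝ) (k : ℕ) :
    blockRot (m + 3) φ ε ^ k = blockRot (m + 3) (k * φ) (ε ^ k) := by
  induction k with
  | zero => simp [blockRot_eq_one]
  | succ k ih => rw [pow_succ, ih, blockRot_mul_blockRot, pow_succ, Nat.cast_succ, add_one_mul]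

theorem rotConj_iterate_eq_self {φ : ℝ} {k : ℕ} (hk : Even k) (hφ : cos (k * φ) = 1)
    (X : Matrix (Fin (m + 3)) (Fin (m + 3)) ℝ) : (rotConj φ)^[k] X = X := by
  have hpow : blockRot (m + 3) φ (-1) ^ k = 1 := by
    rw [blockRot_pow, hk.neg_one_pow, blockRot_eq_one hφ]
  calc (rotConj φ)^[k] X = blockRot (m + 3) φ (-1) ^ k * X * (blockRot (m + 3) φ (-1) ^ k)ᵀ :=
        iterate_conj_transpose _ X k
    _ = X := by rw [hpow, transpose_one, Matrix.one_mul, Matrix.mul_one]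

theorem eq_zero_of_inM_of_offDiagonal {X : Matrix (Fin (m + 3)) (Fin (m + 3)) ℝ} (hX : inM X)
    (hx : X 1 0 = 0 ∧ X 2 0 = 0) (hy : ∀ k : Fin m, X 0 k.succ.succ.succ = 0)
    (hZ : ∀ k : Fin m, X 1 k.succ.succ.succ = 0 ∧ X 2 k.succ.succ.succ = 0) : X = 0 := by
  obtain ⟨hskew, hblock⟩ := inM_iff_blockIndex.mp hX
  have hswap {i j} (h : X i j = 0) : X j i = 0 := by
    rw [apply_swap_eq_neg hskew, h, neg_zero]
  have h12 : X 1 2 = 0 := hblock 1 2 rfl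
  have hrows : ∀ i j, X i j = 0 := by
    simp only [forall_fin_add_three]
    exact ⟨⟨hblock 0 0 rfl, hswap hx.1, hswap hx.2, hy⟩,
      ⟨hx.1, hblock 1 1 rfl, h12, fun k => (hZ k).1⟩,
      ⟨hx.2, hswap h12, hblock 2 2 rfl, fun k => (hZ k).2⟩,
      fun k => ⟨hswap (hy k), hswap (hZ k).1, hswap (hZ k).2, fun l => hblock _ _ rfl⟩⟩
  exact Matrix.ext hrows

theorem eq_zero_of_rotConj_eq_self {φ : ℝ} (hφ : sin φ ≠ 0)
    {X : Matrix (Fin (m + 3)) (Fin (m + 3)) ℝ} (hX : inM X) (hfix : rotConj φ X = X) : X = 0 := by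
  have hcos : cos φ ≠ 1 ∧ cos φ ≠ -1 := not_or.mp (mt sin_eq_zero_iff_cos_eq.mpr hφ)
  have hentry (i j) : (blockRot (m + 3) φ (-1) * (blockRot (m + 3) φ (-1) * X)ᵀ) j i = X i j := by
    rw [← rotConj_apply, hfix]
  have hx : X 1 0 = 0 ∧ X 2 0 = 0 := by
    have h₁ := hentry 1 0
    have h₂ := hentry 2 0
    simp only [blockRot_mul_apply_zero, blockRot_mul_apply_one, blockRot_mul_apply_two,
      transpose_apply] at h₁ h₂
    exact eq_zero_of_rotation_fixed hcos.1 h₁ h₂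
  have hy (k : Fin m) : X 0 k.succ.succ.succ = 0 := by
    have h := hentry 0 k.succ.succ.succ
    simp only [blockRot_mul_apply_zero, blockRot_mul_apply_succ, transpose_apply] at h
    linarith
  have hZ (k : Fin m) : X 1 k.succ.succ.succ = 0 ∧ X 2 k.succ.succ.succ = 0 := by
    have h₁ := hentry 1 k.succ.succ.succ
    have h₂ := hentry 2 k.succ.succ.succ
    simp only [blockRot_mul_apply_succ, blockRot_mul_apply_one, blockRot_mul_apply_two,
      transpose_apply] at h₁ h₂
    -- `-R(φ) = R(φ + π)`
    refine eq_zero_of_rotation_fixed (φ := φ + π) ?_ ?_ ?_ <;> simp only [cos_add_pi, sin_add_pi]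
    · exact fun h => hcos.2 (neg_eq_iff_eq_neg.mp h)
    · linarith
    · linarith
  exact eq_zero_of_inM_of_offDiagonal hX hx hy hZ

end EntryFormulas

end FlagMfld

theorem statement10_general (n k : ℕ) (hn : 3 ≤ n) (hk : 2 ≤ k) :
    (∀ X : Matrix (Fin n) (Fin n) ℝ, inM X → inM (rotConj (Real.pi / k) X)) ∧
    (∀ X : Matrix (Fin n) (Fin n) ℝ, (rotConj (Real.pi / k))^[2 * k] X = X) ∧
    (∀ X : Matrix (Fin n) (Fin n) ℝ, inM X → rotConj (Real.pi / k) X = X → X = 0) := by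
  obtain ⟨m, rfl⟩ := Nat.exists_eq_add_of_le' hn
  have hk_one : (1 : ℝ) < k := by exact_mod_cast hk
  have hcos : Real.cos ((2 * k : ℕ) * (Real.pi / k)) = 1 := by
    rw [Nat.cast_mul, Nat.cast_two, mul_assoc, mul_div_cancel₀ _ (by positivity),
      Real.cos_two_pi]
  have hsin : Real.sin (Real.pi / k) ≠ 0 :=
    (Real.sin_pos_of_pos_of_lt_pi (by positivity) (div_lt_self Real.pi_pos hk_one)).ne'
  exact ⟨fun _ => inM_rotConj _, rotConj_iterate_eq_self (even_two_mul k) hcos,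
    fun _ => eq_zero_of_rotConj_eq_self hsin⟩

/-- `θ(X) = B₄XB₄ᵀ` and `θ'(X) = B₆XB₆ᵀ` map `𝔪` into itself; `θ⁴ = id`
on `𝔪` with no nonzero fixed vector, and `θ'⁶ = id` on `𝔪` with no nonzero fixed vector
(regularity of the homogeneous Φ-space of order 4, resp. 6). -/
theorem statement10 (n : ℕ) (hn : 4 ≤ n) :
    (∀ X : Matrix (Fin n) (Fin n) ℝ, inM X → inM (th4 X)) ∧
    (∀ X : Matrix (Fin n) (Fin n) ℝ, inM X → th4 (th4 (th4 (th4 X))) = X) ∧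
    (∀ X : Matrix (Fin n) (Fin n) ℝ, inM X → th4 X = X → X = 0) ∧
    (∀ X : Matrix (Fin n) (Fin n) ℝ, inM X → inM (th6 X)) ∧
    (∀ X : Matrix (Fin n) (Fin n) ℝ, inM X → th6 (th6 (th6 (th6 (th6 (th6 X))))) = X) ∧
    (∀ X : Matrix (Fin n) (Fin n) ℝ, inM X → th6 X = X → X = 0) := by
  obtain ⟨hM₄, hord₄, hfix₄⟩ := statement10_general n 2 (by omega) (by omega)
  obtain ⟨hM₆, hord₆, hfix₆⟩ := statement10_general n 3 (by omega) (by omega)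
  rw [th4_eq_rotConj, th6_eq_rotConj]
  exact ⟨hM₄, fun X _ => hord₄ X, hfix₄, hM₆, fun X _ => hord₆ X, hfix₆⟩
end

section
/- For every s, t > 0 and all X, Y ∈ 𝔪, each of the canonical f-structures f₀ (order-4 case) and f₁, f₂, f₃, f₄ (order-6 case) is skew-symmetric with respect to g_{s,t}: g_{s,t}(f X, Y) + g_{s,t}(X, f Y) = 0. That is, the canonical f-structures on the 4- and 6-symmetric space SO(n)/SO(2)×SO(n−3) are metric f-structures with respect to every invariant Riemannian metric. -/
open Matrix

open FlagMfld

/-!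
Conjugation `θ` by a block-diagonal orthogonal matrix preserves every bilinear form
`(X, Y) ↦ ∑ i j, w i j * X i j * Y i j` whose weight `w i j` only depends on the blocks of `i` and
`j`, and `g_{s,t}` is such a form. If moreover `θ ^ k = 1`, then `θ ^ (k - i)` is the adjoint of
`θ ^ i`, so the differences `θ ^ i - θ ^ (k - i)` are skew-adjoint, and the canonical f-structures
are linear combinations of these. Writing `B₄` and `B₆` as members of a one-parameter family with
angles `π / 2` and `π / 3` makes their orthogonality and orders instances of the addition formulas.
-/

namespace FlagMfld

section SkewAdjoint

variable {R M : Type*} [CommRing R] [AddCommGroup M] [Module R M]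
  {g : LinearMap.BilinForm R M} {θ : Module.End R M}

theorem isOrthogonal_pow (hθ : g.IsOrthogonal θ) (i : ℕ) : g.IsOrthogonal ⇑(θ ^ i) := by
  induction i with
  | zero => exact fun _ _ => rfl
  | succ i ih =>
    intro x y
    rw [pow_succ, Module.End.mul_apply, Module.End.mul_apply, ih, hθ]

theorem isAdjointPair_pow (hθ : g.IsOrthogonal θ) {i j : ℕ} (hij : θ ^ (i + j) = 1) :
    LinearMap.IsAdjointPair g g ⇑(θ ^ i) ⇑(θ ^ j) := fun x y =>
  calc g ((θ ^ i) x) y = g ((θ ^ i) x) ((θ ^ i) ((θ ^ j) y)) := by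
        rw [← Module.End.mul_apply (θ ^ i), ← pow_add, hij, Module.End.one_apply]
    _ = g x ((θ ^ j) y) := isOrthogonal_pow hθ i _ _

theorem pow_sub_pow_mem_skewAdjointSubmodule (hθ : g.IsOrthogonal θ) {i j : ℕ}
    (hij : θ ^ (i + j) = 1) : θ ^ i - θ ^ j ∈ g.skewAdjointSubmodule := by
  have hji : θ ^ (j + i) = 1 := by rwa [add_comm]
  rw [LinearMap.mem_skewAdjointSubmodule]
  intro x y
  simpa using (isAdjointPair_pow hθ hij).sub (isAdjointPair_pow hθ hji) x y

theorem apply_add_apply_eq_zero_of_mem_skewAdjointSubmodule {f : Module.End R M}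
    (hf : f ∈ g.skewAdjointSubmodule) (x y : M) : g (f x) y + g x (f y) = 0 := by
  rw [(LinearMap.mem_skewAdjointSubmodule f).1 hf x y, Pi.neg_apply, map_neg, neg_add_cancel]

end SkewAdjoint

section Congruence

variable {ι κ R : Type*} [Fintype ι] [CommRing R]

/-- The action `A ↦ (X ↦ A X Aᵀ)` of square matrices on square matrices by congruence. For
orthogonal `A` this is conjugation by `A`, so it models the automorphisms `θ`. -/
def congruence [DecidableEq ι] : Matrix ι ι R →* Module.End R (Matrix ι ι R) where
  toFun A := LinearMap.mulLeft R A ∘ₗ LinearMap.mulRight R Aᵀ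
  map_one' := by ext1; simp
  map_mul' A B := by
    refine LinearMap.ext fun X => ?_
    simp [Matrix.mul_assoc]

theorem congruence_apply [DecidableEq ι] (A X : Matrix ι ι R) :
    congruence A X = A * X * Aᵀ :=
  (Matrix.mul_assoc A X Aᵀ).symm

/-- A matrix is block diagonal for the partition of its indices into the fibres of `β` when its
entries between different fibres vanish. -/
def IsBlockDiagonal (β : ι → κ) (A : Matrix ι ι R) : Prop :=
  ∀ i j, β i ≠ β j → A i j = 0

theorem submatrix_hadamard_congruence [DecidableEq ι] {β : ι → κ} {A : Matrix ι ι R}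
    (hA : IsBlockDiagonal β A) (w : Matrix κ κ R) (X : Matrix ι ι R) :
    w.submatrix β β ⊙ congruence A X = congruence A (w.submatrix β β ⊙ X) := by
  ext i j
  simp only [congruence_apply, hadamard_apply, submatrix_apply, mul_apply, transpose_apply,
    Finset.sum_mul, Finset.mul_sum]
  refine Finset.sum_congr rfl fun l _ => Finset.sum_congr rfl fun k _ => ?_
  by_cases hik : β i = β k
  · by_cases hjl : β j = β l
    · rw [hik, hjl]
      ring
    · simp [hA j l hjl]
  · simp [hA i k hik]

/-- The bilinear form `(X, Y) ↦ ∑ i j, W i j * X i j * Y i j` on square matrices, written as a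
trace so that its invariance can be read off from the cyclicity of the trace. -/
def weightedTraceForm (W : Matrix ι ι R) : LinearMap.BilinForm R (Matrix ι ι R) :=
  LinearMap.mk₂ R (fun X Y => (Xᵀ * (W ⊙ Y)).trace)
    (fun X X' Y => by rw [transpose_add, Matrix.add_mul, trace_add])
    (fun c X Y => by rw [transpose_smul, Matrix.smul_mul, trace_smul])
    (fun X Y Y' => by rw [hadamard_add, Matrix.mul_add, trace_add])
    (fun c X Y => by rw [hadamard_smul, Matrix.mul_smul, trace_smul])

theorem weightedTraceForm_apply (W X Y : Matrix ι ι R) :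
    weightedTraceForm W X Y = (Xᵀ * (W ⊙ Y)).trace :=
  rfl

theorem isOrthogonal_congruence [DecidableEq ι] {β : ι → κ} {A : Matrix ι ι R}
    (hA : IsBlockDiagonal β A) (hAorth : A ∈ orthogonalGroup ι R) (w : Matrix κ κ R) :
    (weightedTraceForm (w.submatrix β β)).IsOrthogonal (congruence A) := fun X Y => by
  have hAA : Aᵀ * A = 1 := (mem_orthogonalGroup_iff' ι R).1 hAorth
  rw [weightedTraceForm_apply, weightedTraceForm_apply, submatrix_hadamard_congruence hA]
  set Z := w.submatrix β β ⊙ Y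
  calc ((congruence A X)ᵀ * congruence A Z).trace
      = (A * (Xᵀ * (Aᵀ * A) * Z * Aᵀ)).trace := by
        simp only [congruence_apply, transpose_mul, transpose_transpose, Matrix.mul_assoc]
    _ = (Xᵀ * (Aᵀ * A) * Z * (Aᵀ * A)).trace := by
        rw [trace_mul_comm, Matrix.mul_assoc _ Aᵀ A]
    _ = (Xᵀ * Z).trace := by rw [hAA, Matrix.mul_one, Matrix.mul_one]

end Congruence

section Metric

/-- The block containing an index: `0` for the first row, `1` for the two rows of the rotation and
`2` for the remaining rows. -/
def block {n : ℕ} (i : Fin n) : Fin 3 :=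
  if i.val = 0 then 0 else if i.val ≤ 2 then 1 else 2

theorem block_natAdd {m : ℕ} (i : Fin m) : block (Fin.natAdd 3 i) = 2 := by
  have hi : ¬ 3 + i.val ≤ 2 := by lia
  simp [block, hi]

/-- The characteristic numbers `1`, `s`, `t` of `g_{s,t}`, arranged according to the pair of blocks
in which `𝔪₁`, `𝔪₂`, `𝔪₃` respectively live. -/
def blockWeight (s t : ℝ) : Matrix (Fin 3) (Fin 3) ℝ :=
  !![0, 1, t; 1, 0, s; t, s, 0]

/-- The metric `g_{s,t}` as a bilinear form on all `n × n` matrices. -/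
noncomputable def gstForm (n : ℕ) (s t : ℝ) :
    LinearMap.BilinForm ℝ (Matrix (Fin n) (Fin n) ℝ) :=
  weightedTraceForm ((((n : ℝ) - 1) • blockWeight s t).submatrix block block)

theorem g0_eq_sum {n : ℕ} (X Y : Matrix (Fin n) (Fin n) ℝ) :
    g0 X Y = ∑ j, ∑ i, ((n : ℝ) - 1) * (X i j * Y i j) := by
  simp only [g0, trace, diag_apply, mul_apply, transpose_apply, Finset.mul_sum]

theorem sum_components_mul_eq_blockWeight_mul {n : ℕ} (s t : ℝ)
    (X Y : Matrix (Fin n) (Fin n) ℝ) (i j : Fin n) :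
    p1 X i j * p1 Y i j + s * (p2 X i j * p2 Y i j) + t * (p3 X i j * p3 Y i j) =
      blockWeight s t (block i) (block j) * (X i j * Y i j) := by
  simp only [p1, p2, p3, of_apply, block]
  split_ifs <;> first | omega | simp [blockWeight]

theorem gstForm_apply {n : ℕ} (s t : ℝ) (X Y : Matrix (Fin n) (Fin n) ℝ) :
    gstForm n s t X Y = gst s t X Y := by
  simp only [gstForm, weightedTraceForm_apply, gst, g0_eq_sum, trace, diag_apply, mul_apply,
    transpose_apply, hadamard_apply, submatrix_apply, Matrix.smul_apply, smul_eq_mul,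
    Finset.mul_sum, ← Finset.sum_add_distrib]
  refine Finset.sum_congr rfl fun j _ => Finset.sum_congr rfl fun i _ => ?_
  linear_combination -((n : ℝ) - 1) * sum_components_mul_eq_blockWeight_mul s t X Y i j

end Metric

section BlockRotation

/-- The rotation `diag(1, [[cos φ, sin φ], [-sin φ, cos φ]])` of `ℝ³` about the first axis. -/
noncomputable def axialRotation (φ : ℝ) : Matrix (Fin 3) (Fin 3) ℝ :=
  !![1, 0, 0; 0, Real.cos φ, Real.sin φ; 0, -Real.sin φ, Real.cos φ]

theorem axialRotation_zero : axialRotation 0 = 1 := by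
  simp [axialRotation, one_fin_three]

theorem axialRotation_two_pi : axialRotation (2 * Real.pi) = 1 := by
  simp [axialRotation, one_fin_three]

theorem axialRotation_add (φ ψ : ℝ) :
    axialRotation (φ + ψ) = axialRotation φ * axialRotation ψ := by
  ext i j
  fin_cases i <;> fin_cases j <;>
    simp [axialRotation, mul_apply, Fin.sum_univ_three, Real.cos_add, Real.sin_add] <;> ring

theorem axialRotation_transpose (φ : ℝ) : (axialRotation φ)ᵀ = axialRotation (-φ) := by
  ext i j
  fin_cases i <;> fin_cases j <;> simp [axialRotation]

/-- The block-diagonal matrix `diag(1, [[cos φ, sin φ], [-sin φ, cos φ]], ε, …, ε)`; both `B₄` and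
`B₆` are of this form, with `ε = -1`. The size is `3 + m` because the matrix has no meaning
in fewer than three dimensions. -/
noncomputable def blockRotation (m : ℕ) (φ ε : ℝ) : Matrix (Fin (3 + m)) (Fin (3 + m)) ℝ :=
  reindexAlgEquiv ℝ ℝ finSumFinEquiv (fromBlocks (axialRotation φ) 0 0 (ε • 1))

variable {m : ℕ}

theorem blockRotation_eq_one {φ : ℝ} (hφ : axialRotation φ = 1) : blockRotation m φ 1 = 1 := by
  rw [blockRotation, hφ, one_smul, fromBlocks_one, map_one]

theorem blockRotation_mul (φ ψ ε δ : ℝ) :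
    blockRotation m φ ε * blockRotation m ψ δ = blockRotation m (φ + ψ) (ε * δ) := by
  rw [blockRotation, blockRotation, blockRotation, ← map_mul, fromBlocks_multiply,
    axialRotation_add]
  simp [smul_smul, mul_comm]

theorem blockRotation_pow (φ ε : ℝ) (k : ℕ) :
    blockRotation m φ ε ^ k = blockRotation m (k * φ) (ε ^ k) := by
  induction k with
  | zero => simp [blockRotation_eq_one axialRotation_zero]
  | succ k ih => rw [pow_succ, ih, blockRotation_mul, pow_succ, Nat.cast_succ, add_one_mul]

theorem blockRotation_transpose (φ ε : ℝ) :
    (blockRotation m φ ε)ᵀ = blockRotation m (-φ) ε := by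
  simp [blockRotation, fromBlocks_transpose, axialRotation_transpose]

theorem blockRotation_mem_orthogonalGroup (φ : ℝ) {ε : ℝ} (hε : ε * ε = 1) :
    blockRotation m φ ε ∈ orthogonalGroup (Fin (3 + m)) ℝ := by
  rw [mem_orthogonalGroup_iff', blockRotation_transpose, blockRotation_mul, neg_add_cancel, hε,
    blockRotation_eq_one axialRotation_zero]

theorem isBlockDiagonal_blockRotation (φ ε : ℝ) :
    IsBlockDiagonal block (blockRotation m φ ε) := by
  intro i j hij
  induction i using Fin.addCases with
  | left i =>
    induction j using Fin.addCases with
    | left j =>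
      fin_cases i <;> fin_cases j <;> simp [block, blockRotation, axialRotation] at hij ⊢
    | right j => simp [blockRotation]
  | right i =>
    induction j using Fin.addCases with
    | left j => simp [blockRotation]
    | right j => exact absurd ((block_natAdd i).trans (block_natAdd j).symm) hij

theorem eq_blockRotation {A : Matrix (Fin (3 + m)) (Fin (3 + m)) ℝ} {φ ε : ℝ}
    (h₁₁ : ∀ i j, A (Fin.castAdd m i) (Fin.castAdd m j) = axialRotation φ i j)
    (h₁₂ : ∀ i j, A (Fin.castAdd m i) (Fin.natAdd 3 j) = 0)
    (h₂₁ : ∀ i j, A (Fin.natAdd 3 i) (Fin.castAdd m j) = 0)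
    (h₂₂ : ∀ i j, A (Fin.natAdd 3 i) (Fin.natAdd 3 j) = if i = j then ε else 0) :
    A = blockRotation m φ ε := by
  ext i j
  induction i using Fin.addCases <;> induction j using Fin.addCases <;>
    simp [h₁₁, h₁₂, h₂₁, h₂₂, blockRotation, one_apply]

theorem B4_eq_blockRotation : B4 = blockRotation m (Real.pi / 2) (-1) := by
  refine eq_blockRotation (fun i j => ?_) (fun i j => ?_) (fun i j => ?_) fun i j => ?_
  · fin_cases i <;> fin_cases j <;> simp [B4, axialRotation, -Fin.val_eq_zero_iff]
  · simp only [B4, of_apply, Fin.ext_iff, Fin.val_castAdd, Fin.val_natAdd]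
    grind
  · simp only [B4, of_apply, Fin.ext_iff, Fin.val_castAdd, Fin.val_natAdd]
    grind
  · simp only [B4, of_apply, Fin.ext_iff, Fin.val_natAdd]
    grind

theorem B6_eq_blockRotation : B6 = blockRotation m (Real.pi / 3) (-1) := by
  refine eq_blockRotation (fun i j => ?_) (fun i j => ?_) (fun i j => ?_) fun i j => ?_
  · fin_cases i <;> fin_cases j <;> simp [B6, axialRotation, -Fin.val_eq_zero_iff]
  · simp only [B6, of_apply, Fin.ext_iff, Fin.val_castAdd, Fin.val_natAdd]
    grind
  · simp only [B6, of_apply, Fin.ext_iff, Fin.val_castAdd, Fin.val_natAdd]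
    grind
  · simp only [B6, of_apply, Fin.ext_iff, Fin.val_natAdd]
    grind

theorem B4_pow_four : (B4 : Matrix (Fin (3 + m)) (Fin (3 + m)) ℝ) ^ 4 = 1 := by
  have hangle : ((4 : ℕ) : ℝ) * (Real.pi / 2) = 2 * Real.pi := by push_cast; ring
  have hsign : (-1 : ℝ) ^ 4 = 1 := by norm_num
  rw [B4_eq_blockRotation, blockRotation_pow, hangle, hsign,
    blockRotation_eq_one axialRotation_two_pi]

theorem B6_pow_six : (B6 : Matrix (Fin (3 + m)) (Fin (3 + m)) ℝ) ^ 6 = 1 := by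
  have hangle : ((6 : ℕ) : ℝ) * (Real.pi / 3) = 2 * Real.pi := by push_cast; ring
  have hsign : (-1 : ℝ) ^ 6 = 1 := by norm_num
  rw [B6_eq_blockRotation, blockRotation_pow, hangle, hsign,
    blockRotation_eq_one axialRotation_two_pi]

theorem isOrthogonal_congruence_blockRotation (s t φ : ℝ) {ε : ℝ} (hε : ε * ε = 1) :
    (gstForm (3 + m) s t).IsOrthogonal (congruence (blockRotation m φ ε)) :=
  isOrthogonal_congruence (isBlockDiagonal_blockRotation φ ε)
    (blockRotation_mem_orthogonalGroup φ hε) _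

end BlockRotation

section FStructure

variable {n : ℕ}

/-- The map `th4`, i.e. the automorphism `θ` of order four, as a linear endomorphism. -/
def theta4 (n : ℕ) : Module.End ℝ (Matrix (Fin n) (Fin n) ℝ) :=
  congruence B4

/-- The map `th6`, i.e. the automorphism `θ` of order six, as a linear endomorphism. -/
noncomputable def theta6 (n : ℕ) : Module.End ℝ (Matrix (Fin n) (Fin n) ℝ) :=
  congruence B6

theorem theta4_apply (X : Matrix (Fin n) (Fin n) ℝ) : theta4 n X = th4 X :=
  congruence_apply B4 X

theorem theta6_apply (X : Matrix (Fin n) (Fin n) ℝ) : theta6 n X = th6 X :=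
  congruence_apply B6 X

theorem theta4_pow_four (m : ℕ) : theta4 (3 + m) ^ 4 = 1 := by
  rw [theta4, ← map_pow, B4_pow_four, map_one]

theorem theta6_pow_six (m : ℕ) : theta6 (3 + m) ^ 6 = 1 := by
  rw [theta6, ← map_pow, B6_pow_six, map_one]

theorem isOrthogonal_theta4 (m : ℕ) (s t : ℝ) :
    (gstForm (3 + m) s t).IsOrthogonal (theta4 (3 + m)) := by
  rw [theta4, B4_eq_blockRotation]
  exact isOrthogonal_congruence_blockRotation s t _ (by norm_num)

theorem isOrthogonal_theta6 (m : ℕ) (s t : ℝ) :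
    (gstForm (3 + m) s t).IsOrthogonal (theta6 (3 + m)) := by
  rw [theta6, B6_eq_blockRotation]
  exact isOrthogonal_congruence_blockRotation s t _ (by norm_num)

theorem f0_eq (X : Matrix (Fin n) (Fin n) ℝ) :
    f0 X = ((1 / 2 : ℝ) • (theta4 n ^ 1 - theta4 n ^ 3)) X := by
  simp [f0, pow_succ, theta4_apply]

theorem f1_eq (X : Matrix (Fin n) (Fin n) ℝ) :
    f1 X = ((1 / √3) • (theta6 n ^ 1 - theta6 n ^ 5)) X := by
  simp [f1, pow_succ, theta6_apply]

theorem f2_eq (X : Matrix (Fin n) (Fin n) ℝ) :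
    f2 X = ((1 / (2 * √3)) •
      ((theta6 n ^ 1 - theta6 n ^ 5) - (theta6 n ^ 2 - theta6 n ^ 4))) X := by
  simp only [f2, pow_succ, pow_zero, one_mul, LinearMap.smul_apply, LinearMap.sub_apply,
    Module.End.mul_apply, theta6_apply]
  congr 1
  abel

theorem f3_eq (X : Matrix (Fin n) (Fin n) ℝ) :
    f3 X = ((1 / (2 * √3)) •
      ((theta6 n ^ 1 - theta6 n ^ 5) + (theta6 n ^ 2 - theta6 n ^ 4))) X := by
  simp only [f3, pow_succ, pow_zero, one_mul, LinearMap.smul_apply, LinearMap.sub_apply,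
    LinearMap.add_apply, Module.End.mul_apply, theta6_apply]
  congr 1
  abel

theorem f4_eq (X : Matrix (Fin n) (Fin n) ℝ) :
    f4 X = ((1 / √3) • (theta6 n ^ 2 - theta6 n ^ 4)) X := by
  simp [f4, pow_succ, theta6_apply]

end FStructure

end FlagMfld

theorem statement11_general {n : ℕ} (hn : 3 ≤ n) (s t : ℝ) (X Y : Matrix (Fin n) (Fin n) ℝ) :
    gst s t (f0 X) Y + gst s t X (f0 Y) = 0 ∧
    gst s t (f1 X) Y + gst s t X (f1 Y) = 0 ∧
    gst s t (f2 X) Y + gst s t X (f2 Y) = 0 ∧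
    gst s t (f3 X) Y + gst s t X (f3 Y) = 0 ∧
    gst s t (f4 X) Y + gst s t X (f4 Y) = 0 := by
  obtain ⟨m, rfl⟩ := Nat.exists_eq_add_of_le hn
  set S := (gstForm (3 + m) s t).skewAdjointSubmodule
  have h₄ : theta4 (3 + m) ^ 1 - theta4 (3 + m) ^ 3 ∈ S :=
    pow_sub_pow_mem_skewAdjointSubmodule (isOrthogonal_theta4 m s t) (theta4_pow_four m)
  have h₆ {i j : ℕ} (hij : i + j = 6) : theta6 (3 + m) ^ i - theta6 (3 + m) ^ j ∈ S :=
    pow_sub_pow_mem_skewAdjointSubmodule (isOrthogonal_theta6 m s t)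
      (hij ▸ theta6_pow_six m)
  have h₁₅ : theta6 (3 + m) ^ 1 - theta6 (3 + m) ^ 5 ∈ S := h₆ rfl
  have h₂₄ : theta6 (3 + m) ^ 2 - theta6 (3 + m) ^ 4 ∈ S := h₆ rfl
  have skew {f : Module.End ℝ (Matrix (Fin (3 + m)) (Fin (3 + m)) ℝ)} (hf : f ∈ S) :=
    apply_add_apply_eq_zero_of_mem_skewAdjointSubmodule hf X Y
  simp only [← gstForm_apply, f0_eq, f1_eq, f2_eq, f3_eq, f4_eq]
  exact ⟨skew (S.smul_mem _ h₄), skew (S.smul_mem _ h₁₅),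
    skew (S.smul_mem _ (S.sub_mem h₁₅ h₂₄)), skew (S.smul_mem _ (S.add_mem h₁₅ h₂₄)),
    skew (S.smul_mem _ h₂₄)⟩

/-- For every `s, t > 0`, each of the canonical f-structures `f₀`
(order 4) and `f₁, f₂, f₃, f₄` (order 6) is skew-symmetric with respect to `g_{s,t}`,
i.e. they are metric f-structures for every invariant Riemannian metric. -/
theorem statement11 (n : ℕ) (hn : 4 ≤ n) (s t : ℝ) (hs : 0 < s) (ht : 0 < t) :
    ∀ X Y : Matrix (Fin n) (Fin n) ℝ, inM X → inM Y →
      gst s t (f0 X) Y + gst s t X (f0 Y) = 0 ∧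
      gst s t (f1 X) Y + gst s t X (f1 Y) = 0 ∧
      gst s t (f2 X) Y + gst s t X (f2 Y) = 0 ∧
      gst s t (f3 X) Y + gst s t X (f3 Y) = 0 ∧
      gst s t (f4 X) Y + gst s t X (f4 Y) = 0 := fun X Y _ _ =>
  statement11_general (by lia) s t X Y
end
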